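/- arXiv:2210.10939 — 2 statements merged into one kernel-verified Lean document; each statement's English description precedes it below -/
import Mathlib

section
/- Suppose the family F(x,t), with F_0 = ∏_ν f_ν^{n_ν} and each f_ν = ∏_{ℓ=1}^{d_ν} (x − a_{νℓ}) with all a_{νℓ} pairwise distinct, satisfies (α_ν, δ_{ν,n(ν)})-Zd for each f_ν with n_ν > 1. Then there exists a nonzero constant c ∈ k such that ver(F) = c · ∏_ν res(f_ν, δ_{ν,n(ν)}^{n_ν−1}) · ∏_ν ∏_{ν'≠ν} res(f_ν, f_{ν'})^{n_{ν'}} / ∏_ν res(f_ν, α_ν^{n_ν−1}) (the factors involving δ and α being 1 whenever n_ν = 1). -/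
open Finset Polynomial

noncomputable section

/-- The limit of a Hahn (Puiseux) series as `t → 0`: the coefficient of the lowest
power of `t` occurring in it (its leading coefficient). -/
def lim0 {L : Type*} [Field L] (f : HahnSeries ℚ L) : L := f.coeff f.order

/-- `s` is a Puiseux series with nonnegative support and constant term `a`
(i.e. `s(0) = a`). -/
def HasConst {L : Type*} [Field L] (s : HahnSeries ℚ L) (a : L) : Prop :=
  s.coeff 0 = a ∧ ∀ q < (0 : ℚ), s.coeff q = 0

/-- The natural ring map `A[[t]] → L((t^ℚ))` induced by `φ : A →+* L`. -/
def Phi {A L : Type*} [CommRing A] [Field L] (φ : A →+* L) :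
    PowerSeries A →+* HahnSeries ℚ L :=
  (HahnSeries.ofPowerSeries ℚ L).comp (PowerSeries.map φ)

/-- The polynomial with power-series coefficients determined by a family
`F(x,t) = Σ_i p_i(x) t^i` of polynomials of degree at most `n'`. -/
def fam {A : Type*} [CommRing A] (n' : ℕ) (p : ℕ → Polynomial A) :
    Polynomial (PowerSeries A) :=
  ∑ j ∈ Finset.range (n' + 1), Polynomial.C (PowerSeries.mk fun i => (p i).coeff j) * X ^ j

/-- `∏_{q ≠ q'} (S q − S q')`, the product of the differences of all (ordered) pairs of
distinct `t`-roots.  For a monic family it equals `(-1)^(N(N-1)/2)` times the discriminant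
`Δ_{A[[t]]}(F) = ∏_{q<q'} (S q − S q')²`; in particular it is nonzero iff
`Δ_{A[[t]]}(F) ≠ 0`. -/
def rootsSep {L : Type*} [Field L] {ι : Type*} [Fintype ι] [DecidableEq ι]
    (S : ι → HahnSeries ℚ L) : HahnSeries ℚ L :=
  ∏ q ∈ Finset.univ.offDiag, (S q.1 - S q.2)

/-- `Δ(F, f_ν)(a ν ℓ, t)_0`: the limit of the generalized formal discriminant of the family
with respect to `f_ν = ∏_ℓ (x − a ν ℓ)`, evaluated at `x = a ν ℓ`.  Here the `t`-roots
approaching the roots of `f_ν` are grouped as `s ν · i` for `i` in `Fin (n ν)`; following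
Definition 2.3, `s'_i(x) = f_ν(x) − ∏_ℓ (x − s ν ℓ i)`, so that
`s'_i(x) − s'_j(x) = ∏_ℓ (x − s ν ℓ j) − ∏_ℓ (x − s ν ℓ i)`, and
`Δ(F,f_ν)(x,t) = [∏_{others} (x − s_ℓ)]^(2 n ν − 2) ∏_{i<j} (s'_i − s'_j)²`. -/
def gdlim {L : Type*} [Field L] {m : ℕ} (d n : Fin m → ℕ)
    (a : (ν : Fin m) → Fin (d ν) → L)
    (s : (ν : Fin m) → (ℓ : Fin (d ν)) → Fin (n ν) → HahnSeries ℚ L)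
    (ν : Fin m) (ℓ : Fin (d ν)) : L :=
  lim0 ((∏ ν' ∈ Finset.univ.erase ν, ∏ ℓ', ∏ i', (HahnSeries.C (a ν ℓ) - s ν' ℓ' i')) ^
      (2 * n ν - 2) *
    ∏ q ∈ Finset.univ.filter (fun q : Fin (n ν) × Fin (n ν) => q.1 < q.2),
      ((∏ ℓ', (HahnSeries.C (a ν ℓ) - s ν ℓ' q.2)) -
        ∏ ℓ', (HahnSeries.C (a ν ℓ) - s ν ℓ' q.1)) ^ 2)

/-- The discriminant `Δ(f) = ∏_{ℓ<ℓ'} (a ℓ − a ℓ')²` of a monic split polynomial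
`f = ∏_ℓ (x − a ℓ)`. -/
def discOf {L : Type*} [Field L] {d : ℕ} (a : Fin d → L) : L :=
  ∏ q ∈ Finset.univ.filter (fun q : Fin d × Fin d => q.1 < q.2), (a q.1 - a q.2) ^ 2

/-- The vertex `ver(F)` of the family (Definition 3.1), computed from the root data:
`ver(F) = ∏_{ν,ℓ} Δ(F,f_ν)(a_{νℓ},t)_0 · ∏_{ν<ν'} res(f_ν,f_{ν'})^(2(n_ν+n_{ν'}−n_ν n_{ν'}))`,
where `res(f_ν, f_{ν'}) = ∏_{ℓ,ℓ'} (a ν ℓ − a ν' ℓ')`. -/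
def ver {L : Type*} [Field L] {m : ℕ} (d n : Fin m → ℕ)
    (a : (ν : Fin m) → Fin (d ν) → L)
    (s : (ν : Fin m) → (ℓ : Fin (d ν)) → Fin (n ν) → HahnSeries ℚ L) : L :=
  (∏ ν, ∏ ℓ, gdlim d n a s ν ℓ) *
    ∏ ν, ∏ ν' ∈ Finset.Ioi ν,
      (∏ ℓ, ∏ ℓ', (a ν ℓ - a ν' ℓ')) ^
        (2 * ((n ν : ℤ) + (n ν' : ℤ) - (n ν : ℤ) * (n ν' : ℤ)))

/-!
Regard the family as a polynomial in `x` over `A⟦t⟧`, so that a Zeuthen decomposition for `f_ν` with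
`n = n_ν` reads `α F = B ^ n + t ^ N D`. At each of the `n` roots `s_i` of `F` with `s_i(0) = a`, a
root of `f_ν`, this gives `B(s_i) ^ n = -t ^ N D(s_i)`, hence `B(s_i) ∼ w_i t ^ (N / n)` with
`w_i ^ n = -δ(a)`. Differentiating the decomposition in `x` at `s_i` shows that the `w_i` are
pairwise distinct, so they are all the roots of `X ^ n + δ(a)`. Since `a` is a simple root of
`B(x, 0) = f_ν β_0`, the differences `s_i - s_j` are asymptotic to
`(w_i - w_j) / B'(a) · t ^ (N / n)`, and the limit of the generalized discriminant at `a` becomes,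
up to explicit factors, the discriminant of a polynomial `X ^ n + e`. Multiplying over all `a`, the
resultants `res(f_ν, f_ν')` combine with those in the definition of the vertex, up to sign.
-/
/-- `f` is `c t^q` plus terms of higher order. The coefficient `c` may vanish, so that leading terms
can be added without case distinctions; `HasConst f c` is the case `q = 0` over `ℚ`. -/
def HasLeadingTerm {Γ R : Type*} [PartialOrder Γ] [Zero R] (f : HahnSeries Γ R) (q : Γ) (c : R) :
    Prop :=
  f.coeff q = c ∧ ∀ r < q, f.coeff r = 0

theorem HasConst.hasLeadingTerm {L : Type*} [Field L] {f : HahnSeries ℚ L} {c : L}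
    (h : HasConst f c) : HasLeadingTerm f 0 c :=
  h

namespace HasLeadingTerm

section Zero

variable {Γ R : Type*} [PartialOrder Γ] [Zero R] {f : HahnSeries Γ R} {q : Γ} {c e : R}

theorem single (q : Γ) (c : R) : HasLeadingTerm (HahnSeries.single q c) q c :=
  ⟨by simp, fun _ hr => HahnSeries.coeff_single_of_ne hr.ne⟩

theorem of_lt {r : Γ} (hf : HasLeadingTerm f q c) (h : r < q) : HasLeadingTerm f r 0 :=
  ⟨hf.2 r h, fun _ hs => hf.2 _ (hs.trans h)⟩

theorem unique (hf : HasLeadingTerm f q c) (hf' : HasLeadingTerm f q e) : c = e :=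
  hf.1.symm.trans hf'.1

end Zero

theorem lim0_eq {L : Type*} [Field L] {f : HahnSeries ℚ L} {q : ℚ} {c : L}
    (hf : HasLeadingTerm f q c) (hc : c ≠ 0) : lim0 f = c := by
  have hq : f.coeff q ≠ 0 := hf.1.symm ▸ hc
  have horder : f.order = q := by
    refine (HahnSeries.order_le_of_coeff_ne_zero hq).antisymm (not_lt.1 fun hlt => ?_)
    have hf0 := HahnSeries.coeff_order_eq_zero.1 (hf.2 _ hlt)
    exact hq (by simp [hf0])
  rw [lim0, horder, hf.1]

section Additive

variable {Γ R : Type*} [PartialOrder Γ] [AddCommGroup R] {f g : HahnSeries Γ R} {q : Γ} {c e : R}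

theorem add (hf : HasLeadingTerm f q c) (hg : HasLeadingTerm g q e) :
    HasLeadingTerm (f + g) q (c + e) :=
  ⟨by simp [hf.1, hg.1], fun r hr => by simp [hf.2 r hr, hg.2 r hr]⟩

theorem neg (hf : HasLeadingTerm f q c) : HasLeadingTerm (-f) q (-c) :=
  ⟨by simp [hf.1], fun r hr => by simp [hf.2 r hr]⟩

theorem sub (hf : HasLeadingTerm f q c) (hg : HasLeadingTerm g q e) :
    HasLeadingTerm (f - g) q (c - e) := by
  simpa only [sub_eq_add_neg] using hf.add hg.neg

theorem sum {ι : Type*} {S : Finset ι} {F : ι → HahnSeries Γ R} {c : ι → R}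
    (h : ∀ i ∈ S, HasLeadingTerm (F i) q (c i)) :
    HasLeadingTerm (∑ i ∈ S, F i) q (∑ i ∈ S, c i) :=
  ⟨by simpa using sum_congr rfl fun i hi => (h i hi).1,
    fun r hr => by simpa using sum_eq_zero fun i hi => (h i hi).2 r hr⟩

end Additive

section Multiplicative

variable {Γ R : Type*} [AddCommMonoid Γ] [LinearOrder Γ] [IsOrderedCancelAddMonoid Γ]
  [CommSemiring R] {f g : HahnSeries Γ R} {q r : Γ} {c e : R}

theorem C (c : R) : HasLeadingTerm (HahnSeries.C c : HahnSeries Γ R) 0 c :=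
  single 0 c

theorem mul (hf : HasLeadingTerm f q c) (hg : HasLeadingTerm g r e) :
    HasLeadingTerm (f * g) (q + r) (c * e) := by
  have hzero (i j : Γ) (h : i < q ∨ j < r) : f.coeff i * g.coeff j = 0 := by
    rcases h with h | h
    · rw [hf.2 i h, zero_mul]
    · rw [hg.2 j h, mul_zero]
  constructor
  · rw [HahnSeries.coeff_mul, Finset.sum_eq_single (q, r), hf.1, hg.1]
    · rintro ⟨i, j⟩ hij hne
      have hadd : i + j = q + r := (Finset.mem_antidiagonal.1 hij).2.2
      refine hzero i j ?_
      contrapose! hne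
      obtain ⟨rfl, rfl⟩ := (add_eq_add_iff_eq_and_eq hne.1 hne.2).1 hadd.symm
      rfl
    · intro hnot
      by_contra hne
      exact hnot (Finset.mem_antidiagonal.2
        ⟨left_ne_zero_of_mul hne, right_ne_zero_of_mul hne, rfl⟩)
  · intro k hk
    rw [HahnSeries.coeff_mul]
    refine Finset.sum_eq_zero fun ij hij => hzero _ _ ?_
    have hadd : ij.1 + ij.2 = k := (Finset.mem_antidiagonal.1 hij).2.2
    contrapose! hk
    exact hadd ▸ add_le_add hk.1 hk.2

theorem mul_const (hf : HasLeadingTerm f q c) (hg : HasLeadingTerm g 0 e) :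
    HasLeadingTerm (f * g) q (c * e) := by
  simpa only [add_zero] using hf.mul hg

theorem prod {ι : Type*} {S : Finset ι} {F : ι → HahnSeries Γ R} {c : ι → R}
    (h : ∀ i ∈ S, HasLeadingTerm (F i) q (c i)) :
    HasLeadingTerm (∏ i ∈ S, F i) (#S • q) (∏ i ∈ S, c i) := by
  classical
  induction S using Finset.induction_on with
  | empty => simpa using C (Γ := Γ) (1 : R)
  | insert a S ha ih =>
    rw [prod_insert ha, prod_insert ha, card_insert_of_notMem ha, succ_nsmul']
    exact (h a (mem_insert_self a S)).mul (ih fun i hi => h i (mem_insert_of_mem hi))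

theorem prod_const {ι : Type*} {S : Finset ι} {F : ι → HahnSeries Γ R} {c : ι → R}
    (h : ∀ i ∈ S, HasLeadingTerm (F i) 0 (c i)) :
    HasLeadingTerm (∏ i ∈ S, F i) 0 (∏ i ∈ S, c i) := by
  simpa only [smul_zero] using prod h

theorem pow (hf : HasLeadingTerm f q c) (n : ℕ) : HasLeadingTerm (f ^ n) (n • q) (c ^ n) := by
  simpa using prod (S := range n) fun _ _ => hf

theorem pow_const (hf : HasLeadingTerm f 0 c) (n : ℕ) : HasLeadingTerm (f ^ n) 0 (c ^ n) := by
  simpa only [smul_zero] using hf.pow n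

variable [NoZeroDivisors R]

theorem of_pow {n : ℕ} (hn : n ≠ 0) (h : HasLeadingTerm (f ^ n) (n • q) c) :
    ∃ w, HasLeadingTerm f q w ∧ w ^ n = c := by
  have hf : HasLeadingTerm f q (f.coeff q) := by
    refine ⟨rfl, fun r hr => ?_⟩
    by_contra hne
    have hf0 : f ≠ 0 := by rintro rfl; exact hne rfl
    have horder : f.order < q := (HahnSeries.order_le_of_coeff_ne_zero hne).trans_lt hr
    have hpow : (f ^ n).coeff (f ^ n).order = 0 :=
      h.2 _ (by simpa using nsmul_lt_nsmul_right hn horder)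
    exact pow_ne_zero n hf0 (HahnSeries.coeff_order_eq_zero.1 hpow)
  exact ⟨_, hf, (hf.pow n).unique h⟩

theorem of_mul_const (hg : HasLeadingTerm g 0 e) (he : e ≠ 0) (h : HasLeadingTerm (f * g) q c) :
    ∃ w, HasLeadingTerm f q w ∧ w * e = c := by
  have hf : HasLeadingTerm f q (f.coeff q) := by
    refine ⟨rfl, fun r hr => ?_⟩
    by_contra hne
    have horder : f.order < q := (HahnSeries.order_le_of_coeff_ne_zero hne).trans_lt hr
    have hlead : HasLeadingTerm f f.order (f.coeff f.order) :=
      ⟨rfl, fun _ => HahnSeries.coeff_eq_zero_of_lt_order⟩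
    have hprod : f.coeff f.order * e = 0 := (hlead.mul_const hg).1.symm.trans (h.2 _ horder)
    have hf0 := HahnSeries.coeff_order_eq_zero.1 ((mul_eq_zero.1 hprod).resolve_right he)
    exact hne (by simp [hf0])
  exact ⟨_, hf, (hf.mul_const hg).unique h⟩

end Multiplicative

theorem prod_sub_prod {Γ R : Type*} [AddCommMonoid Γ] [LinearOrder Γ]
    [IsOrderedCancelAddMonoid Γ] [CommRing R] {q : Γ} {ι : Type*} [DecidableEq ι] {S : Finset ι}
    {F G : ι → HahnSeries Γ R} {c e : ι → R} (hF : ∀ i ∈ S, HasLeadingTerm (F i) 0 (c i))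
    (hG : ∀ i ∈ S, HasLeadingTerm (G i) 0 (c i))
    (hFG : ∀ i ∈ S, HasLeadingTerm (F i - G i) q (e i)) :
    HasLeadingTerm (∏ i ∈ S, F i - ∏ i ∈ S, G i) q (∑ i ∈ S, e i * ∏ j ∈ S.erase i, c j) := by
  induction S using Finset.induction_on with
  | empty => exact ⟨by simp, by simp⟩
  | insert a S ha ih =>
    have hS {P : ι → Prop} (h : ∀ i ∈ insert a S, P i) : ∀ i ∈ S, P i :=
      fun i hi => h i (mem_insert_of_mem hi)
    have haS := mem_insert_self a S
    have hsum : ∑ i ∈ S, e i * ∏ j ∈ (insert a S).erase i, c j =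
        (∑ i ∈ S, e i * ∏ j ∈ S.erase i, c j) * c a := by
      rw [sum_mul]
      refine sum_congr rfl fun i hi => ?_
      rw [erase_insert_of_ne (ne_of_mem_of_not_mem hi ha).symm,
        prod_insert fun h => ha (mem_of_mem_erase h)]
      ring
    have hdiff : F a * ∏ i ∈ S, F i - G a * ∏ i ∈ S, G i =
        (F a - G a) * ∏ i ∈ S, F i + (∏ i ∈ S, F i - ∏ i ∈ S, G i) * G a := by ring
    rw [prod_insert ha, prod_insert ha, sum_insert ha, erase_insert ha, hsum, hdiff]
    exact ((hFG a haS).mul_const (prod_const (hS hF))).add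
      ((ih (hS hF) (hS hG) (hS hFG)).mul_const (hG a haS))

end HasLeadingTerm

section Evaluation

variable {A L : Type*} [CommRing A] [Field L] (φ : A →+* L)

/-- The value at `x` of a polynomial over `A⟦t⟧`, a Hahn series in `t`. -/
def evalAt (x : HahnSeries ℚ L) : (PowerSeries A)[X] →+* HahnSeries ℚ L :=
  eval₂RingHom (Phi φ) x

/-- The value at `(x, t) = (a, 0)` of a polynomial in `x` over `A⟦t⟧`. -/
def specialEval (a : L) : (PowerSeries A)[X] →+* L :=
  (eval₂RingHom φ a).comp (mapRingHom PowerSeries.constantCoeff)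

theorem evalAt_C (x : HahnSeries ℚ L) (g : PowerSeries A) : evalAt φ x (C g) = Phi φ g := by
  simp [evalAt]

theorem hasLeadingTerm_Phi (g : PowerSeries A) :
    HasLeadingTerm (Phi φ g) 0 (φ (PowerSeries.constantCoeff g)) := by
  constructor
  · have h := HahnSeries.ofPowerSeries_apply_coeff (Γ := ℚ) (PowerSeries.map φ g) 0
    rw [Nat.cast_zero] at h
    simpa [Phi] using h
  · intro r hr
    simp only [Phi, RingHom.comp_apply, HahnSeries.ofPowerSeries_apply]
    refine HahnSeries.embDomain_of_notMem_range ?_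
    rintro ⟨n, rfl⟩
    exact hr.not_ge (by simp)

theorem hasLeadingTerm_Phi_X_pow (N : ℕ) :
    HasLeadingTerm (Phi φ (PowerSeries.X ^ N)) (N : ℚ) 1 := by
  have hX : Phi φ PowerSeries.X = HahnSeries.single 1 1 := by
    simp [Phi, HahnSeries.ofPowerSeries_X]
  simpa [hX] using (HasLeadingTerm.single (1 : ℚ) (1 : L)).pow N

variable {x y : HahnSeries ℚ L} {a : L}

theorem hasLeadingTerm_evalAt (hx : HasLeadingTerm x 0 a) (G : (PowerSeries A)[X]) :
    HasLeadingTerm (evalAt φ x G) 0 (specialEval φ a G) := by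
  induction G using Polynomial.induction_on' with
  | add G H hG hH => simpa only [map_add] using hG.add hH
  | monomial n g =>
    simpa [evalAt, specialEval] using (hasLeadingTerm_Phi φ g).mul_const (hx.pow_const n)

variable {φ}

theorem exists_evalAt_sub_evalAt (hx : HasLeadingTerm x 0 a) (hy : HasLeadingTerm y 0 a)
    (G : (PowerSeries A)[X]) :
    ∃ V, evalAt φ x G - evalAt φ y G = (x - y) * V ∧
      HasLeadingTerm V 0 (specialEval φ a (derivative G)) := by
  induction G using Polynomial.induction_on' with
  | add G H hG hH =>
    obtain ⟨V, hV, hV0⟩ := hG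
    obtain ⟨W, hW, hW0⟩ := hH
    refine ⟨V + W, ?_, by simpa only [derivative_add, map_add] using hV0.add hW0⟩
    rw [map_add, map_add, mul_add, ← hV, ← hW]
    ring
  | monomial n g =>
    refine ⟨Phi φ g * ∑ i ∈ range n, x ^ i * y ^ (n - 1 - i), ?_, ?_⟩
    · rw [mul_left_comm, mul_comm (x - y), geom_sum₂_mul]
      simp [evalAt, mul_sub]
    · have hderiv : specialEval φ a (derivative (monomial n g)) =
          φ (PowerSeries.constantCoeff g) * ∑ i ∈ range n, a ^ i * a ^ (n - 1 - i) := by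
        simp [specialEval, derivative_monomial, geom_sum₂_self, mul_assoc]
      rw [hderiv]
      exact (hasLeadingTerm_Phi φ g).mul_const
        (HasLeadingTerm.sum fun i _ => (hx.pow_const i).mul_const (hy.pow_const (n - 1 - i)))

end Evaluation

section Lifting

variable {A : Type*} [CommRing A]

/-- The embedding of `A⟦t⟧[x]` into `A[x]⟦t⟧`, which arranges a polynomial over `A⟦t⟧` by
powers of `t`. -/
def swapVars : (PowerSeries A)[X] →+* PowerSeries A[X] :=
  eval₂RingHom (PowerSeries.map C) (PowerSeries.C X)

theorem coeff_coeff_swapVars (G : (PowerSeries A)[X]) (i j : ℕ) :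
    (PowerSeries.coeff i (swapVars G)).coeff j = PowerSeries.coeff i (G.coeff j) := by
  induction G using Polynomial.induction_on' with
  | add G H hG hH => simp only [map_add, coeff_add, hG, hH]
  | monomial n g =>
    rw [swapVars, coe_eval₂RingHom, eval₂_monomial, ← map_pow, PowerSeries.coeff_mul_C,
      PowerSeries.coeff_map, coeff_C_mul_X_pow, coeff_monomial]
    split_ifs <;> simp_all

theorem swapVars_fam {M : ℕ} {p : ℕ → A[X]} (hdeg : ∀ i, (p i).natDegree ≤ M) :
    swapVars (fam M p) = PowerSeries.mk p := by
  ext i j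
  rw [coeff_coeff_swapVars, PowerSeries.coeff_mk]
  simp only [fam, finsetSum_coeff, coeff_C_mul_X_pow, apply_ite (PowerSeries.coeff i),
    PowerSeries.coeff_mk, map_zero, sum_ite_eq, mem_range, Nat.lt_succ_iff]
  split_ifs with hj
  · rfl
  · exact (coeff_eq_zero_of_natDegree_lt ((hdeg i).trans_lt (not_le.1 hj))).symm

theorem swapVars_map_C (α : A[X]) : swapVars (α.map PowerSeries.C) = PowerSeries.C α := by
  ext i j
  rw [coeff_coeff_swapVars, coeff_map, PowerSeries.coeff_C, PowerSeries.coeff_C]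
  split_ifs <;> simp

theorem exists_eq_X_pow_mul_of_coeff_swapVars_eq_zero {G : (PowerSeries A)[X]} {N : ℕ}
    (h : ∀ i < N, PowerSeries.coeff i (swapVars G) = 0) :
    ∃ D, G = C (PowerSeries.X ^ N) * D ∧
      D.map PowerSeries.constantCoeff = PowerSeries.coeff N (swapVars G) := by
  have hdvd : C (PowerSeries.X ^ N) ∣ G := by
    refine C_dvd_iff_dvd_coeff _ _ |>.2 fun j => PowerSeries.X_pow_dvd_iff.2 fun i hi => ?_
    rw [← coeff_coeff_swapVars, h i hi, coeff_zero]
  obtain ⟨D, rfl⟩ := hdvd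
  refine ⟨D, rfl, ?_⟩
  ext j
  rw [coeff_coeff_swapVars, coeff_C_mul, coeff_map, ← PowerSeries.coeff_zero_eq_constantCoeff_apply]
  simpa only [zero_add] using (PowerSeries.coeff_X_pow_mul (D.coeff j) N 0).symm

theorem exists_fam_eq_pow_add {M N n : ℕ} {p : ℕ → A[X]} {b : PowerSeries A[X]} {α δ : A[X]}
    (hdeg : ∀ i, (p i).natDegree ≤ M) (hb : ∀ j, N ≤ j → PowerSeries.coeff j b = 0)
    (hp : ∀ i ≤ N, α * p i = PowerSeries.coeff i (b ^ n) + if i = N then δ else 0) :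
    ∃ B D : (PowerSeries A)[X],
      α.map PowerSeries.C * fam M p = B ^ n + C (PowerSeries.X ^ N) * D ∧
      B.map PowerSeries.constantCoeff = PowerSeries.constantCoeff b ∧
      D.map PowerSeries.constantCoeff = δ := by
  have hbdeg (j : ℕ) : (PowerSeries.coeff j b).natDegree ≤
      (range N).sup fun j => (PowerSeries.coeff j b).natDegree := by
    rcases lt_or_ge j N with hj | hj
    · exact le_sup (f := fun j => (PowerSeries.coeff j b).natDegree) (mem_range.2 hj)
    · simp [hb j hj]
  set B := fam ((range N).sup fun j => (PowerSeries.coeff j b).natDegree)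
    fun j => PowerSeries.coeff j b with hBdef
  have hB : swapVars B = b := by
    rw [hBdef, swapVars_fam hbdeg]
    ext1 j
    exact PowerSeries.coeff_mk j _
  have hcoeff (i : ℕ) (hi : i ≤ N) : PowerSeries.coeff i
      (swapVars (α.map PowerSeries.C * fam M p - B ^ n)) = if i = N then δ else 0 := by
    simp [swapVars_fam hdeg, swapVars_map_C, hB, hp i hi]
  obtain ⟨D, hD, hD0⟩ := exists_eq_X_pow_mul_of_coeff_swapVars_eq_zero
    fun i hi => (hcoeff i hi.le).trans (if_neg hi.ne)
  refine ⟨B, D, by rw [← hD]; ring, ?_, by rw [hD0, hcoeff N le_rfl, if_pos rfl]⟩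
  ext j
  rw [coeff_map, ← PowerSeries.coeff_zero_eq_constantCoeff_apply, ← coeff_coeff_swapVars, hB,
    PowerSeries.coeff_zero_eq_constantCoeff_apply]

end Lifting

section LocalRoots

theorem eval_derivative_mul_prod_X_sub_C {R ι : Type*} [CommRing R] [Fintype ι] [DecidableEq ι]
    (Q : R[X]) (s : ι → R) (i : ι) :
    (derivative (Q * ∏ j, (X - C (s j)))).eval (s i) =
      Q.eval (s i) * ∏ j ∈ univ.erase i, (s i - s j) := by
  rw [← mul_prod_erase univ _ (mem_univ i), mul_left_comm, derivative_mul]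
  simp [eval_prod]

variable {A L : Type*} [CommRing A] [Field L] {φ : A →+* L} {a : L} {n N : ℕ}
  {F E B D : (PowerSeries A)[X]}

theorem HasLeadingTerm.sub_of_evalAt {x y : HahnSeries ℚ L} {q : ℚ} {v w : L}
    (hx : HasLeadingTerm x 0 a) (hy : HasLeadingTerm y 0 a)
    (hu : specialEval φ a (derivative B) ≠ 0) (hBx : HasLeadingTerm (evalAt φ x B) q v)
    (hBy : HasLeadingTerm (evalAt φ y B) q w) :
    HasLeadingTerm (x - y) q ((v - w) / specialEval φ a (derivative B)) := by
  obtain ⟨V, hV, hV0⟩ := exists_evalAt_sub_evalAt hx hy B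
  obtain ⟨z, hz, hzu⟩ := hV0.of_mul_const hu (hV ▸ hBx.sub hBy)
  rwa [← hzu, mul_div_cancel_right₀ z hu]

variable (hF : E * F = B ^ n + C (PowerSeries.X ^ N) * D)
include hF

theorem exists_hasLeadingTerm_evalAt (hn : n ≠ 0) {x : HahnSeries ℚ L}
    (hx : HasLeadingTerm x 0 a) (hroot : evalAt φ x F = 0) :
    ∃ w, HasLeadingTerm (evalAt φ x B) (N / n : ℚ) w ∧ w ^ n = -specialEval φ a D := by
  have hpow : evalAt φ x B ^ n = -(Phi φ (PowerSeries.X ^ N) * evalAt φ x D) := by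
    have h := congrArg (evalAt φ x) hF
    rw [map_mul, hroot, mul_zero, map_add, map_pow, map_mul, evalAt_C] at h
    exact eq_neg_of_add_eq_zero_left h.symm
  have hlead := ((hasLeadingTerm_Phi_X_pow φ N).mul_const (hasLeadingTerm_evalAt φ hx D)).neg
  have hq : (N : ℚ) = n • (N / n : ℚ) := by
    rw [nsmul_eq_mul, mul_div_cancel₀ _ (Nat.cast_ne_zero.2 hn)]
  rw [← hpow, one_mul, hq] at hlead
  exact hlead.of_pow hn

theorem hasLeadingTerm_evalAt_derivative_mul (hn : n ≠ 0) (hN : N ≠ 0)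
    {x : HahnSeries ℚ L} {w : L} (hx : HasLeadingTerm x 0 a) (hroot : evalAt φ x F = 0)
    (hw : HasLeadingTerm (evalAt φ x B) (N / n : ℚ) w) :
    HasLeadingTerm (evalAt φ x (derivative F) * evalAt φ x E) ((n - 1) • (N / n : ℚ))
      (w ^ (n - 1) * (n * specialEval φ a (derivative B))) := by
  have hrel : evalAt φ x (derivative F) * evalAt φ x E =
      evalAt φ x B ^ (n - 1) * evalAt φ x (C (n : PowerSeries A) * derivative B) +
        Phi φ (PowerSeries.X ^ N) * evalAt φ x (derivative D) := by
    have h := congrArg (fun P => evalAt φ x (derivative P)) hF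
    simp only [derivative_mul, derivative_pow, derivative_C, map_add, map_mul,
      map_pow (evalAt φ x), hroot, evalAt_C, mul_zero, zero_mul, zero_add] at h
    rw [mul_comm, h, map_mul, evalAt_C]
    ring
  have hlt : (n - 1) • (N / n : ℚ) < N := by
    have hq : 0 < (N / n : ℚ) := by positivity
    calc (n - 1) • (N / n : ℚ) < n • (N / n : ℚ) := nsmul_lt_nsmul_left hq (Nat.pred_lt hn)
      _ = N := by rw [nsmul_eq_mul, mul_div_cancel₀ _ (Nat.cast_ne_zero.2 hn)]
  have hlead := ((hw.pow (n - 1)).mul_const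
    (hasLeadingTerm_evalAt φ hx (C (n : PowerSeries A) * derivative B))).add
      (((hasLeadingTerm_Phi_X_pow φ N).mul_const
        (hasLeadingTerm_evalAt φ hx (derivative D))).of_lt hlt)
  have hconst : specialEval φ a (C (n : PowerSeries A) * derivative B) =
      n * specialEval φ a (derivative B) := by simp
  rwa [← hrel, hconst, add_zero] at hlead

variable {Q : (HahnSeries ℚ L)[X]} {s : Fin n → HahnSeries ℚ L} (hN : N ≠ 0) (hnL : (n : L) ≠ 0)
  (hs : ∀ i, HasLeadingTerm (s i) 0 a) (hQ : ∀ i, ∃ c, HasLeadingTerm (Q.eval (s i)) 0 c)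
  (hsplit : F.map (Phi φ) = Q * ∏ i, (X - C (s i)))
  (hu : specialEval φ a (derivative B) ≠ 0) (hD : specialEval φ a D ≠ 0)
include hN hnL hs hQ hsplit hu hD

theorem injective_of_hasLeadingTerm_evalAt {w : Fin n → L}
    (hroot : ∀ i, evalAt φ (s i) F = 0)
    (hw : ∀ i, HasLeadingTerm (evalAt φ (s i) B) (N / n : ℚ) (w i))
    (hwn : ∀ i, w i ^ n = -specialEval φ a D) : Function.Injective w := by
  -- If `w i = w j`, then `F'(s i) = Q(s i) * ∏ (s i - s l)` vanishes to order greater than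
  -- `(n - 1) * N / n`, which the derivative of `hF` at `s i` excludes.
  intro i j hij
  by_contra hne
  have hn : n ≠ 0 := ne_zero_of_map (f := Nat.castRingHom L) hnL
  have hderiv : evalAt φ (s i) (derivative F) =
      (∏ l ∈ univ.erase i, (s i - s l)) * Q.eval (s i) := by
    rw [evalAt, coe_eval₂RingHom, ← eval_map, ← derivative_map, hsplit,
      eval_derivative_mul_prod_X_sub_C, mul_comm]
  have hprod := HasLeadingTerm.prod (S := univ.erase i) fun l _ =>
    HasLeadingTerm.sub_of_evalAt (hs i) (hs l) hu (hw i) (hw l)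
  have hcoeff : ∏ l ∈ univ.erase i, (w i - w l) / specialEval φ a (derivative B) = 0 :=
    prod_eq_zero (mem_erase.2 ⟨Ne.symm hne, mem_univ j⟩) (by rw [hij, sub_self, zero_div])
  rw [card_erase_of_mem (mem_univ i), card_univ, Fintype.card_fin, hcoeff] at hprod
  obtain ⟨c, hc⟩ := hQ i
  have hzero := (hprod.mul_const hc).mul_const (hasLeadingTerm_evalAt φ (hs i) E)
  rw [← hderiv, zero_mul, zero_mul] at hzero
  have hwi : w i ≠ 0 := by
    rintro hwi
    exact hD (by simpa [hwi, hn] using hwn i)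
  exact mul_ne_zero (pow_ne_zero _ hwi) (mul_ne_zero hnL hu)
    ((hasLeadingTerm_evalAt_derivative_mul hF hn hN (hs i) (hroot i) (hw i)).unique hzero)

theorem exists_hasLeadingTerm_sub : ∃ w : Fin n → L, Function.Injective w ∧
    (∀ i, w i ^ n = -specialEval φ a D) ∧ ∀ i j, HasLeadingTerm (s i - s j) (N / n : ℚ)
      ((w i - w j) / specialEval φ a (derivative B)) := by
  have hroot (i : Fin n) : evalAt φ (s i) F = 0 := by
    rw [evalAt, coe_eval₂RingHom, ← eval_map, hsplit, eval_mul, eval_prod,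
      prod_eq_zero (mem_univ i) (by simp), mul_zero]
  have hn : n ≠ 0 := ne_zero_of_map (f := Nat.castRingHom L) hnL
  choose w hw hwn using fun i => exists_hasLeadingTerm_evalAt hF hn (hs i) (hroot i)
  exact ⟨w, injective_of_hasLeadingTerm_evalAt hF hN hnL hs hQ hsplit hu hD hroot hw hwn, hwn,
    fun i j => HasLeadingTerm.sub_of_evalAt (hs i) (hs j) hu (hw i) (hw j)⟩

end LocalRoots

section Discriminant

theorem neg_one_pow_mul_self {R : Type*} [CommRing R] (n : ℕ) : (-1 : R) ^ n * (-1) ^ n = 1 := by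
  rw [← mul_pow, neg_one_mul, neg_neg, one_pow]

theorem prod_filter_lt {M : Type*} [CommMonoid M] {n : ℕ} (f : Fin n → Fin n → M) :
    ∏ q ∈ univ.filter (fun q : Fin n × Fin n => q.1 < q.2), f q.1 q.2 =
      ∏ i, ∏ j ∈ Ioi i, f i j := by
  rw [prod_filter, ← univ_product_univ, prod_product]
  refine prod_congr rfl fun i _ => ?_
  rw [← prod_filter, filter_lt_eq_Ioi]

theorem prod_prod_Ioi_neg_one {R : Type*} [CommRing R] (n : ℕ) :
    ∏ i : Fin n, ∏ _j ∈ Ioi i, (-1 : R) = (-1) ^ n.choose 2 := by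
  simp only [prod_const, Fin.card_Ioi, prod_pow_eq_pow_sum]
  rw [Fin.sum_univ_eq_sum_range (fun i => n - 1 - i), sum_range_reflect (fun i => i), sum_range_id,
    Nat.choose_two_right]

theorem prod_prod_erase_sub {L : Type*} [Field L] {n : ℕ} (v : Fin n → L) :
    ∏ i, ∏ j ∈ univ.erase i, (v i - v j) = (-1) ^ n.choose 2 * discOf v := by
  have h := prod_prod_Ioi_mul_eq_prod_prod_off_diag fun i j => v j - v i
  simp only [compl_singleton] at h
  rw [← h, discOf, prod_filter_lt fun i j => (v i - v j) ^ 2, ← prod_prod_Ioi_neg_one,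
    ← prod_mul_distrib]
  refine prod_congr rfl fun i _ => ?_
  rw [← prod_mul_distrib]
  exact prod_congr rfl fun j _ => by ring

theorem nodal_eq_X_pow_sub_C {R : Type*} [CommRing R] [IsDomain R] {n : ℕ} (hn : n ≠ 0)
    {v : Fin n → R} {e : R} (hv : Function.Injective v) (hve : ∀ i, v i ^ n = e) :
    Lagrange.nodal univ v = X ^ n - C e := by
  have hdeg : (Lagrange.nodal univ v).degree = (X ^ n - C e).degree := by
    rw [Lagrange.degree_nodal, degree_X_pow_sub_C (Nat.pos_of_ne_zero hn), card_univ,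
      Fintype.card_fin]
  refine eq_of_degree_sub_lt_of_eval_index_eq univ hv.injOn ?_ fun i _ => ?_
  · rw [← Lagrange.degree_nodal (v := v)]
    exact degree_sub_lt_left hdeg Lagrange.nodal_ne_zero
      (Lagrange.nodal_monic.leadingCoeff.trans (monic_X_pow_sub_C e hn).leadingCoeff.symm)
  · simp [Lagrange.eval_nodal_at_node, hve]

theorem discOf_of_pow_eq_neg {L : Type*} [Field L] {n : ℕ} (hn : n ≠ 0) {v : Fin n → L} {e : L}
    (hv : Function.Injective v) (hve : ∀ i, v i ^ n = -e) :
    discOf v = (-1) ^ n.choose 2 * n ^ n * e ^ (n - 1) := by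
  have hnodal := nodal_eq_X_pow_sub_C hn hv hve
  have hderiv (i : Fin n) : ∏ j ∈ univ.erase i, (v i - v j) = n * v i ^ (n - 1) := by
    rw [← Lagrange.eval_nodal, ← Lagrange.eval_nodal_derivative_eval_node_eq (mem_univ i), hnodal]
    simp [derivative_X_pow]
  have hprod : ∏ i, v i = (-1) ^ n * e := by
    have h := congrArg (eval 0) hnodal
    simp only [Lagrange.eval_nodal, zero_sub, prod_neg, card_univ, Fintype.card_fin] at h
    simp only [eval_sub, eval_pow, eval_X, eval_C, zero_pow hn, zero_sub, neg_neg] at h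
    rw [← h, ← mul_assoc, neg_one_pow_mul_self, one_mul]
  have hdisc := prod_prod_erase_sub v
  simp only [hderiv, prod_mul_distrib, prod_const, card_univ, Fintype.card_fin, prod_pow, hprod,
    mul_pow] at hdisc
  have heven : ((-1 : L) ^ n) ^ (n - 1) = 1 := by
    rw [← pow_mul]
    exact (Nat.even_mul_pred_self n).neg_one_pow
  calc discOf v = (-1) ^ n.choose 2 * ((-1) ^ n.choose 2 * discOf v) := by
        rw [← mul_assoc, neg_one_pow_mul_self, one_mul]
    _ = (-1) ^ n.choose 2 * n ^ n * e ^ (n - 1) := by rw [← hdisc, heven, one_mul, mul_assoc]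

end Discriminant

section GeneralizedDiscriminant

theorem discOf_ne_zero {L : Type*} [Field L] {n : ℕ} {v : Fin n → L} (hv : Function.Injective v) :
    discOf v ≠ 0 :=
  prod_ne_zero_iff.2 fun _ hq =>
    pow_ne_zero 2 (sub_ne_zero.2 (hv.ne (mem_filter.1 hq).2.ne))

theorem hasLeadingTerm_prod_sub_prod {L ι : Type*} [Field L] [Fintype ι] [DecidableEq ι]
    {a : ι → L} {x y : ι → HahnSeries ℚ L} {q : ℚ} {e : ι → L} (ℓ : ι)
    (hx : ∀ i, HasLeadingTerm (x i) 0 (a i)) (hy : ∀ i, HasLeadingTerm (y i) 0 (a i))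
    (hxy : ∀ i, HasLeadingTerm (x i - y i) q (e i)) :
    HasLeadingTerm (∏ i, (HahnSeries.C (a ℓ) - y i) - ∏ i, (HahnSeries.C (a ℓ) - x i)) q
      (e ℓ * ∏ i ∈ univ.erase ℓ, (a ℓ - a i)) := by
  have hsum : ∑ i, e i * ∏ j ∈ univ.erase i, (a ℓ - a j) =
      e ℓ * ∏ j ∈ univ.erase ℓ, (a ℓ - a j) := by
    refine sum_eq_single_of_mem ℓ (mem_univ ℓ) fun i _ hi => ?_
    rw [prod_eq_zero (mem_erase.2 ⟨hi.symm, mem_univ ℓ⟩) (sub_self _), mul_zero]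
  rw [← hsum]
  refine HasLeadingTerm.prod_sub_prod (fun i _ => (HasLeadingTerm.C _).sub (hy i))
    (fun i _ => (HasLeadingTerm.C _).sub (hx i)) fun i _ => ?_
  rw [sub_sub_sub_cancel_left]
  exact hxy i

variable {L : Type*} [Field L] {m : ℕ} {d n : Fin m → ℕ} {a : (ν : Fin m) → Fin (d ν) → L}
  {s : (ν : Fin m) → (ℓ : Fin (d ν)) → Fin (n ν) → HahnSeries ℚ L}

variable (n a) in
/-- The value at the root `a ν ℓ` of `f_ν` of the complementary factor `∏_{ν' ≠ ν} f_ν' ^ n_ν'` of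
`F_0 = ∏_ν f_ν ^ n_ν`. -/
def cofactor (ν : Fin m) (ℓ : Fin (d ν)) : L :=
  ∏ ν' ∈ univ.erase ν, (∏ ℓ', (a ν ℓ - a ν' ℓ')) ^ n ν'

theorem cofactor_ne_zero (ha : Function.Injective fun q : Σ ν, Fin (d ν) => a q.1 q.2) (ν : Fin m)
    (ℓ : Fin (d ν)) : cofactor n a ν ℓ ≠ 0 :=
  prod_ne_zero_iff.2 fun ν' hν' => pow_ne_zero _ <| prod_ne_zero_iff.2 fun ℓ' _ => sub_ne_zero.2 <|
    ha.ne (a₁ := ⟨ν, ℓ⟩) (a₂ := ⟨ν', ℓ'⟩) fun h => ne_of_mem_erase hν' (congrArg Sigma.fst h).symm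

theorem hasLeadingTerm_cofactor (hs : ∀ ν ℓ i, HasLeadingTerm (s ν ℓ i) 0 (a ν ℓ)) {ν : Fin m}
    {ℓ : Fin (d ν)} {x : HahnSeries ℚ L} (hx : HasLeadingTerm x 0 (a ν ℓ)) :
    HasLeadingTerm (∏ ν' ∈ univ.erase ν, ∏ ℓ', ∏ i', (x - s ν' ℓ' i')) 0 (cofactor n a ν ℓ) := by
  have h := HasLeadingTerm.prod_const (S := univ.erase ν) fun ν' _ =>
    HasLeadingTerm.prod_const (S := univ) fun ℓ' _ =>
      HasLeadingTerm.prod_const (S := univ) fun i' _ => hx.sub (hs ν' ℓ' i')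
  simpa only [cofactor, prod_const, card_univ, Fintype.card_fin, prod_pow] using h

theorem exists_mul_prod_X_sub_C (hs : ∀ ν ℓ i, HasLeadingTerm (s ν ℓ i) 0 (a ν ℓ)) (ν : Fin m)
    (ℓ : Fin (d ν)) :
    ∃ Q : (HahnSeries ℚ L)[X],
      ∏ ν, ∏ ℓ, ∏ i, (X - C (s ν ℓ i)) = Q * ∏ i, (X - C (s ν ℓ i)) ∧
      ∀ i, ∃ c, HasLeadingTerm (Q.eval (s ν ℓ i)) 0 c := by
  refine ⟨(∏ ν' ∈ univ.erase ν, ∏ ℓ', ∏ i, (X - C (s ν' ℓ' i))) *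
    ∏ ℓ' ∈ univ.erase ℓ, ∏ i, (X - C (s ν ℓ' i)), ?_, fun i => ?_⟩
  · rw [mul_assoc, prod_erase_mul univ (fun ℓ => ∏ i, (X - C (s ν ℓ i))) (mem_univ ℓ),
      prod_erase_mul univ (fun ν => ∏ ℓ, ∏ i, (X - C (s ν ℓ i))) (mem_univ ν)]
  · simp only [eval_mul, eval_prod, eval_sub, eval_X, eval_C]
    exact ⟨_, (hasLeadingTerm_cofactor hs (hs ν ℓ i)).mul_const
      (HasLeadingTerm.prod_const fun ℓ' _ => HasLeadingTerm.prod_const fun j _ =>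
        (hs ν ℓ i).sub (hs ν ℓ' j))⟩

theorem gdlim_eq_cofactor_pow_mul_discOf
    (ha : Function.Injective fun q : Σ ν, Fin (d ν) => a q.1 q.2)
    (hs : ∀ ν ℓ i, HasLeadingTerm (s ν ℓ i) 0 (a ν ℓ)) {ν : Fin m} {ℓ : Fin (d ν)} {q : ℚ}
    {v : Fin (n ν) → L} (hv : Function.Injective v)
    (hdiff : ∀ i j, HasLeadingTerm ((∏ ℓ', (HahnSeries.C (a ν ℓ) - s ν ℓ' j)) -
      ∏ ℓ', (HahnSeries.C (a ν ℓ) - s ν ℓ' i)) q (v i - v j)) :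
    gdlim d n a s ν ℓ = cofactor n a ν ℓ ^ (2 * n ν - 2) * discOf v := by
  have hcof := (hasLeadingTerm_cofactor hs (HasLeadingTerm.C (a ν ℓ))).pow_const (2 * n ν - 2)
  have hdisc := HasLeadingTerm.prod
    (S := univ.filter fun q : Fin (n ν) × Fin (n ν) => q.1 < q.2)
    fun q _ => (hdiff q.1 q.2).pow 2
  exact (hcof.mul hdisc).lim0_eq
    (mul_ne_zero (pow_ne_zero _ (cofactor_ne_zero ha ν ℓ)) (discOf_ne_zero hv))

theorem gdlim_eq_one (ha : Function.Injective fun q : Σ ν, Fin (d ν) => a q.1 q.2)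
    (hs : ∀ ν ℓ i, HasLeadingTerm (s ν ℓ i) 0 (a ν ℓ)) {ν : Fin m} (hν : n ν = 1) (ℓ : Fin (d ν)) :
    gdlim d n a s ν ℓ = 1 := by
  have : Subsingleton (Fin (n ν)) := Fin.subsingleton_iff_le_one.2 hν.le
  have h := gdlim_eq_cofactor_pow_mul_discOf ha hs (ℓ := ℓ) (q := 0) (v := fun _ => 0)
    (Function.injective_of_subsingleton _) fun i j => by
      rw [Subsingleton.elim i j, sub_self, sub_self]
      exact ⟨rfl, fun _ _ => rfl⟩
  have hempty : univ.filter (fun q : Fin (n ν) × Fin (n ν) => q.1 < q.2) = ∅ :=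
    filter_eq_empty_iff.2 fun q _ => (Subsingleton.elim q.1 q.2).not_lt
  rw [h, discOf, hempty, prod_empty, hν, pow_zero, one_mul]

end GeneralizedDiscriminant

section Zeuthen

variable {A L : Type*} [CommRing A] [Field L] {φ : A →+* L} {m : ℕ} {d n : Fin m → ℕ}
  {a : (ν : Fin m) → Fin (d ν) → L}

theorem eval_mul_cofactor {f : Fin m → A[X]} (hf : ∀ ν, (f ν).map φ = ∏ ℓ, (X - C (a ν ℓ)))
    {ν : Fin m} {α β : A[X]} (h : α * ∏ ν, f ν ^ n ν = (f ν * β) ^ n ν) (ℓ : Fin (d ν)) :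
    (α.map φ).eval (a ν ℓ) * cofactor n a ν ℓ = (β.map φ).eval (a ν ℓ) ^ n ν := by
  have hmonic : ((f ν).map φ).Monic := by
    rw [hf]
    exact monic_prod_of_monic _ _ fun ℓ _ => monic_X_sub_C (a ν ℓ)
  have hcancel : α.map φ * ∏ ν' ∈ univ.erase ν, (f ν').map φ ^ n ν' = β.map φ ^ n ν := by
    refine mul_left_cancel₀ (pow_ne_zero (n ν) hmonic.ne_zero) ?_
    rw [mul_left_comm, mul_prod_erase univ (fun ν => (f ν).map φ ^ n ν) (mem_univ ν), ← mul_pow]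
    simpa only [Polynomial.map_mul, Polynomial.map_pow, Polynomial.map_prod] using
      congrArg (Polynomial.map φ) h
  simpa [hf, eval_prod, cofactor] using congrArg (eval (a ν ℓ)) hcancel

theorem specialEval_derivative_of_map_eq {d : ℕ} {a : Fin d → L} {f β : A[X]}
    {B : (PowerSeries A)[X]} (hf : f.map φ = ∏ ℓ, (X - C (a ℓ)))
    (hB : B.map PowerSeries.constantCoeff = f * β) (ℓ : Fin d) :
    specialEval φ (a ℓ) (derivative B) =
      (β.map φ).eval (a ℓ) * ∏ ℓ' ∈ univ.erase ℓ, (a ℓ - a ℓ') := by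
  rw [← eval_derivative_mul_prod_X_sub_C, ← hf, ← Polynomial.map_mul, mul_comm β, ← hB]
  simp [specialEval, derivative_map, eval_map]

variable {s : (ν : Fin m) → (ℓ : Fin (d ν)) → Fin (n ν) → HahnSeries ℚ L} {M N : ℕ} {p : ℕ → A[X]}
  {f : Fin m → A[X]} {ν : Fin m} {α β δ : A[X]} {b : PowerSeries A[X]}
  (ha : Function.Injective fun q : Σ ν, Fin (d ν) => a q.1 q.2)
  (hs : ∀ ν ℓ i, HasLeadingTerm (s ν ℓ i) 0 (a ν ℓ))
  (hdeg : ∀ i, (p i).natDegree ≤ M)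
  (hsplit : (fam M p).map (Phi φ) = ∏ ν, ∏ ℓ, ∏ i, (X - C (s ν ℓ i)))
  (hf : (f ν).map φ = ∏ ℓ, (X - C (a ν ℓ)))
  (hn : (n ν : L) ≠ 0) (hN : N ≠ 0)
  (hδ : ∀ ℓ, (δ.map φ).eval (a ν ℓ) ≠ 0) (hβ : ∀ ℓ, (β.map φ).eval (a ν ℓ) ≠ 0)
  (hb : ∀ j, N ≤ j → PowerSeries.coeff j b = 0) (hb0 : PowerSeries.constantCoeff b = f ν * β)
  (hp : ∀ i ≤ N, α * p i = PowerSeries.coeff i (b ^ n ν) + if i = N then δ else 0)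

include ha hs hdeg hsplit hf hn hN hδ hβ hb hb0 hp

theorem exists_hasLeadingTerm_prod_sub_prod (ℓ : Fin (d ν)) :
    ∃ v : Fin (n ν) → L, Function.Injective v ∧
      (∀ i, v i ^ n ν = -((δ.map φ).eval (a ν ℓ) / (β.map φ).eval (a ν ℓ) ^ n ν)) ∧
      ∀ i j, HasLeadingTerm ((∏ ℓ', (HahnSeries.C (a ν ℓ) - s ν ℓ' j)) -
        ∏ ℓ', (HahnSeries.C (a ν ℓ) - s ν ℓ' i)) (N / n ν : ℚ) (v i - v j) := by
  obtain ⟨B, D, hF, hB, hD⟩ := exists_fam_eq_pow_add hdeg hb hp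
  rw [hb0] at hB
  have hdiff (ℓ : Fin (d ν)) : ∏ ℓ' ∈ univ.erase ℓ, (a ν ℓ - a ν ℓ') ≠ 0 :=
    prod_ne_zero_iff.2 fun ℓ' hℓ' => sub_ne_zero.2 fun h => ne_of_mem_erase hℓ'
      (sigma_mk_injective (ha (a₁ := ⟨ν, ℓ⟩) (a₂ := ⟨ν, ℓ'⟩) h)).symm
  have hDδ (ℓ : Fin (d ν)) : specialEval φ (a ν ℓ) D = (δ.map φ).eval (a ν ℓ) := by
    simp [specialEval, ← hD, eval_map]
  have hroots (ℓ : Fin (d ν)) : ∃ w : Fin (n ν) → L, Function.Injective w ∧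
      (∀ i, w i ^ n ν = -(δ.map φ).eval (a ν ℓ)) ∧
      ∀ i j, HasLeadingTerm (s ν ℓ i - s ν ℓ j) (N / n ν : ℚ) ((w i - w j) /
        ((β.map φ).eval (a ν ℓ) * ∏ ℓ' ∈ univ.erase ℓ, (a ν ℓ - a ν ℓ'))) := by
    obtain ⟨Q, hQ, hQ0⟩ := exists_mul_prod_X_sub_C hs ν ℓ
    have hB' := specialEval_derivative_of_map_eq hf hB ℓ
    rw [← hB', ← hDδ]
    exact exists_hasLeadingTerm_sub hF hN hn (hs ν ℓ) hQ0 (hsplit.trans hQ)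
      (hB' ▸ mul_ne_zero (hβ ℓ) (hdiff ℓ)) (hDδ ℓ ▸ hδ ℓ)
  choose w hinj hw hlead using hroots
  refine ⟨fun i => w ℓ i / (β.map φ).eval (a ν ℓ), fun i j h => hinj ℓ ?_, fun i => ?_,
    fun i j => ?_⟩
  · exact (div_left_inj' (hβ ℓ)).1 h
  · rw [div_pow, hw, neg_div]
  · have h := hasLeadingTerm_prod_sub_prod ℓ (fun ℓ => hs ν ℓ i) (fun ℓ => hs ν ℓ j)
      fun ℓ => hlead ℓ i j
    rwa [← div_div, div_mul_cancel₀ _ (hdiff ℓ), sub_div] at h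

theorem gdlim_eq_of_zeuthen
    (hα : ∀ ℓ, (α.map φ).eval (a ν ℓ) * cofactor n a ν ℓ = (β.map φ).eval (a ν ℓ) ^ n ν)
    (ℓ : Fin (d ν)) :
    gdlim d n a s ν ℓ = (-1) ^ (n ν).choose 2 * (n ν : L) ^ n ν *
      (δ.map φ).eval (a ν ℓ) ^ (n ν - 1) * cofactor n a ν ℓ ^ (n ν - 1) /
        (α.map φ).eval (a ν ℓ) ^ (n ν - 1) := by
  obtain ⟨v, hv, hvn, hlead⟩ := exists_hasLeadingTerm_prod_sub_prod ha hs hdeg hsplit hf hn hN hδ hβ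
    hb hb0 hp ℓ
  have hG := pow_ne_zero (n ν - 1) (cofactor_ne_zero (n := n) ha ν ℓ)
  have hn0 : n ν ≠ 0 := ne_zero_of_map (f := Nat.castRingHom L) hn
  rw [gdlim_eq_cofactor_pow_mul_discOf ha hs hv hlead, discOf_of_pow_eq_neg hn0 hv hvn, ← hα ℓ,
    ← Nat.mul_sub_one, two_mul, pow_add, div_pow, mul_pow, mul_div_assoc', mul_div_assoc']
  field_simp

end Zeuthen

section ResultantBookkeeping

theorem prod_prod_sub_comm {R ι κ : Type*} [CommRing R] [Fintype ι] [Fintype κ] (a : ι → R)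
    (b : κ → R) :
    ∏ j, ∏ i, (b j - a i) =
      (-1) ^ (Fintype.card ι * Fintype.card κ) * ∏ i, ∏ j, (a i - b j) := by
  have hneg (i : ι) : ∏ j, (b j - a i) = (-1) ^ Fintype.card κ * ∏ j, (a i - b j) := by
    rw [← card_univ, ← prod_neg]
    simp only [neg_sub]
  rw [prod_comm, prod_congr rfl fun i _ => hneg i, prod_mul_distrib, prod_const, card_univ,
    ← pow_mul, mul_comm (Fintype.card κ)]

variable {K : Type*} [Field K]

theorem pow_mul_pow_mul_zpow_eq {η r : K} (hη : η * η = 1) (hr : r ≠ 0) {m n : ℕ} (hm : m ≠ 0)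
    (hn : n ≠ 0) :
    (r ^ n) ^ (m - 1) * ((η * r) ^ m) ^ (n - 1) * r ^ (2 * ((m : ℤ) + n - m * n)) =
      η ^ (m * n) * (r ^ n * (η * r) ^ m) := by
  obtain ⟨m, rfl⟩ := Nat.exists_eq_add_one_of_ne_zero hm
  obtain ⟨n, rfl⟩ := Nat.exists_eq_add_one_of_ne_zero hn
  have hη_pow : η ^ ((m + 1) * n) = η ^ ((m + 1) * (n + 1)) * η ^ (m + 1) := by
    have hη_sq : (η ^ (m + 1)) ^ 2 = 1 := by rw [← pow_mul', pow_mul, pow_two, hη, one_pow]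
    rw [mul_add_one, pow_add, mul_assoc, ← pow_two, hη_sq, mul_one]
  have hr_pow : r ^ ((n + 1) * m) * r ^ ((m + 1) * n) *
      r ^ (2 * (((m + 1 : ℕ) : ℤ) + (n + 1 : ℕ) - (m + 1 : ℕ) * (n + 1 : ℕ))) =
      r ^ (n + 1) * r ^ (m + 1) := by
    simp only [← zpow_natCast, ← zpow_add₀ hr]
    congr 1
    push_cast
    ring
  simp only [Nat.add_sub_cancel, ← pow_mul, mul_pow]
  linear_combination r ^ ((n + 1) * m) * r ^ ((m + 1) * n) *
      r ^ (2 * (((m + 1 : ℕ) : ℤ) + (n + 1 : ℕ) - (m + 1 : ℕ) * (n + 1 : ℕ))) * hη_pow +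
    η ^ ((m + 1) * (n + 1)) * η ^ (m + 1) * hr_pow

theorem prod_pow_mul_prod_zpow_eq {ι : Type*} [Fintype ι] [LinearOrder ι]
    [LocallyFiniteOrderTop ι] [LocallyFiniteOrderBot ι] {n : ι → ℕ} (hn : ∀ i, n i ≠ 0)
    {R η : ι → ι → K} (hη : ∀ i j, η i j * η i j = 1) (hR : ∀ i j, i ≠ j → R i j ≠ 0)
    (hswap : ∀ i j, R j i = η i j * R i j) :
    (∏ i, (∏ j ∈ univ.erase i, R i j ^ n j) ^ (n i - 1)) *
        ∏ i, ∏ j ∈ Ioi i, R i j ^ (2 * ((n i : ℤ) + n j - n i * n j)) =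
      (∏ i, ∏ j ∈ Ioi i, η i j ^ (n i * n j)) * ∏ i, ∏ j ∈ univ.erase i, R i j ^ n j := by
  have hpairs (f : ι → ι → K) :
      ∏ i, ∏ j ∈ univ.erase i, f j i = ∏ i, ∏ j ∈ Ioi i, f j i * f i j := by
    simpa only [compl_singleton] using (prod_prod_Ioi_mul_eq_prod_prod_off_diag f).symm
  simp only [← prod_pow]
  rw [hpairs fun j i => (R i j ^ n j) ^ (n i - 1), hpairs fun j i => R i j ^ n j]
  simp only [← prod_mul_distrib]
  refine prod_congr rfl fun i _ => prod_congr rfl fun j hj => ?_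
  rw [hswap i j]
  exact pow_mul_pow_mul_zpow_eq (hη i j) (hR i j (mem_Ioi.1 hj).ne) (hn i) (hn j)

end ResultantBookkeeping

section Vertex

/-- The constant `c` with `ver(F) = c · ∏ res(f_ν, δ_ν ^ (n_ν - 1)) · ⋯`; it depends only on the
degrees `d ν` of the `f_ν` and on the multiplicities `n ν`. The first product collects the
discriminants of the polynomials `X ^ n_ν + e`, the second one the signs
`res(f_ν', f_ν) = ± res(f_ν, f_ν')`. -/
def vertexConst {m : ℕ} (d n : Fin m → ℕ) : ℤ :=
  (∏ ν, ((-1) ^ (n ν).choose 2 * (n ν : ℤ) ^ n ν) ^ d ν) *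
    ∏ ν, ∏ ν' ∈ Ioi ν, ((-1) ^ (d ν * d ν')) ^ (n ν * n ν')

theorem vertexConst_ne_zero {m : ℕ} (d : Fin m → ℕ) {n : Fin m → ℕ} (hn : ∀ ν, n ν ≠ 0) :
    vertexConst d n ≠ 0 := by
  simp [vertexConst, prod_eq_zero_iff, hn]

variable {L : Type*} [Field L] {m : ℕ} {d n : Fin m → ℕ} {a : (ν : Fin m) → Fin (d ν) → L}

theorem prod_cofactor (n : Fin m → ℕ) (a : (ν : Fin m) → Fin (d ν) → L) (ν : Fin m) :
    ∏ ℓ, cofactor n a ν ℓ =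
      ∏ ν' ∈ univ.erase ν, (∏ ℓ, ∏ ℓ', (a ν ℓ - a ν' ℓ')) ^ n ν' := by
  simp only [cofactor, ← prod_pow]
  rw [prod_comm]

theorem prod_cofactor_pow_mul_prod_zpow (hn : ∀ ν, n ν ≠ 0)
    (ha : Function.Injective fun q : Σ ν, Fin (d ν) => a q.1 q.2) :
    (∏ ν, ∏ ℓ, cofactor n a ν ℓ ^ (n ν - 1)) *
        ∏ ν, ∏ ν' ∈ Ioi ν, (∏ ℓ, ∏ ℓ', (a ν ℓ - a ν' ℓ')) ^
          (2 * ((n ν : ℤ) + (n ν' : ℤ) - (n ν : ℤ) * (n ν' : ℤ))) =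
      (∏ ν, ∏ ν' ∈ Ioi ν, ((-1 : L) ^ (d ν * d ν')) ^ (n ν * n ν')) *
        ∏ ν, ∏ ν' ∈ univ.erase ν, (∏ ℓ, ∏ ℓ', (a ν ℓ - a ν' ℓ')) ^ n ν' := by
  simp only [prod_pow univ (n _ - 1), prod_cofactor]
  refine prod_pow_mul_prod_zpow_eq hn (fun ν ν' => neg_one_pow_mul_self _) (fun ν ν' hνν' => ?_)
    fun ν ν' => ?_
  · exact prod_ne_zero_iff.2 fun ℓ _ => prod_ne_zero_iff.2 fun ℓ' _ => sub_ne_zero.2 <|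
      ha.ne (a₁ := ⟨ν, ℓ⟩) (a₂ := ⟨ν', ℓ'⟩) fun h => hνν' (congrArg Sigma.fst h)
  · simpa only [Fintype.card_fin] using prod_prod_sub_comm (a ν) (a ν')

theorem ver_eq_of_gdlim_eq {s : (ν : Fin m) → (ℓ : Fin (d ν)) → Fin (n ν) → HahnSeries ℚ L}
    (hn : ∀ ν, n ν ≠ 0) (ha : Function.Injective fun q : Σ ν, Fin (d ν) => a q.1 q.2)
    {x y : (ν : Fin m) → Fin (d ν) → L}
    (h : ∀ ν ℓ, gdlim d n a s ν ℓ = (-1) ^ (n ν).choose 2 * (n ν : L) ^ n ν * x ν ℓ ^ (n ν - 1) *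
      cofactor n a ν ℓ ^ (n ν - 1) / y ν ℓ ^ (n ν - 1)) :
    ver d n a s = (vertexConst d n : L) * (∏ ν, ∏ ℓ, x ν ℓ ^ (n ν - 1)) *
      (∏ ν, ∏ ν' ∈ univ.erase ν, (∏ ℓ, ∏ ℓ', (a ν ℓ - a ν' ℓ')) ^ n ν') /
        (∏ ν, ∏ ℓ, y ν ℓ ^ (n ν - 1)) := by
  have hres := prod_cofactor_pow_mul_prod_zpow hn ha
  simp only [ver, h, prod_div_distrib, prod_mul_distrib, prod_const, card_univ, Fintype.card_fin]
  rw [div_mul_eq_mul_div, mul_assoc, hres, vertexConst]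
  push_cast
  simp only [prod_mul_distrib, mul_pow]
  ring

end Vertex

theorem stmt8_general {A L : Type*} [CommRing A] [Field L] (φ : A →+* L)
    (n' : ℕ) (p : ℕ → A[X]) (hdeg : ∀ i, (p i).natDegree ≤ n')
    (m : ℕ) (d nn : Fin m → ℕ) (hnn : ∀ ν, (nn ν : L) ≠ 0)
    (a : (ν : Fin m) → Fin (d ν) → L)
    (ha : Function.Injective fun q : Σ ν, Fin (d ν) => a q.1 q.2)
    (fp : Fin m → A[X]) (hffac : ∀ ν, (fp ν).map φ = ∏ ℓ, (X - C (a ν ℓ)))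
    (hF0 : p 0 = ∏ ν, fp ν ^ nn ν)
    (s : (ν : Fin m) → (ℓ : Fin (d ν)) → Fin (nn ν) → HahnSeries ℚ L)
    (hs : ∀ ν ℓ i, HasConst (s ν ℓ i) (a ν ℓ))
    (hsplit : (fam n' p).map (Phi φ) = ∏ ν, ∏ ℓ, ∏ i, (X - C (s ν ℓ i)))
    (αp δp : Fin m → A[X]) (β : Fin m → ℕ → A[X]) (nd : Fin m → ℕ)
    (hZd : ∀ ν, 1 < nn ν →
      1 ≤ nd ν ∧
      (∀ ℓ, ((αp ν * δp ν).map φ).eval (a ν ℓ) ≠ 0) ∧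
      ∀ i ≤ nd ν, αp ν * p i =
        PowerSeries.coeff (R := A[X]) i
          ((PowerSeries.mk fun j =>
            if j = 0 then fp ν * β ν 0 else if j < nd ν then β ν j else 0) ^ nn ν) +
          (if i = nd ν then δp ν else 0)) :
    ver d nn a s =
      (vertexConst d nn : L) *
        (∏ ν, ∏ ℓ, (((δp ν).map φ).eval (a ν ℓ)) ^ (nn ν - 1)) *
        (∏ ν, ∏ ν' ∈ univ.erase ν, (∏ ℓ, ∏ ℓ', (a ν ℓ - a ν' ℓ')) ^ nn ν') /
        (∏ ν, ∏ ℓ, (((αp ν).map φ).eval (a ν ℓ)) ^ (nn ν - 1)) := by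
  have hnn0 (ν : Fin m) : nn ν ≠ 0 := ne_zero_of_map (f := Nat.castRingHom L) (hnn ν)
  have hs' (ν ℓ i) : HasLeadingTerm (s ν ℓ i) 0 (a ν ℓ) := (hs ν ℓ i).hasLeadingTerm
  refine ver_eq_of_gdlim_eq hnn0 ha fun ν ℓ => ?_
  obtain hν | hν := (Nat.one_le_iff_ne_zero.2 (hnn0 ν)).eq_or_lt
  · simp [gdlim_eq_one ha hs' hν.symm, ← hν]
  obtain ⟨hN, hαδ, hp⟩ := hZd ν hν
  have hN0 : nd ν ≠ 0 := Nat.one_le_iff_ne_zero.1 hN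
  simp only [Polynomial.map_mul, eval_mul, mul_ne_zero_iff] at hαδ
  have hα := eval_mul_cofactor hffac (α := αp ν) (β := β ν 0) (ν := ν) (n := nn) <| by
    simpa [← hF0, hN0.symm] using hp 0 (Nat.zero_le _)
  have hβ (ℓ) : ((β ν 0).map φ).eval (a ν ℓ) ≠ 0 :=
    ne_zero_pow (hnn0 ν) (hα ℓ ▸ mul_ne_zero (hαδ ℓ).1 (cofactor_ne_zero ha ν ℓ))
  refine gdlim_eq_of_zeuthen ha hs' hdeg hsplit (hffac ν) (hnn ν) hN0 (fun ℓ => (hαδ ℓ).2) hβ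
    (fun j hj => ?_) (by simp) hp hα ℓ
  rw [PowerSeries.coeff_mk, if_neg (Nat.one_le_iff_ne_zero.1 (hN.trans hj)), if_neg hj.not_gt]

/-- **Theorem 3.7.**  Suppose `F(x,t)` satisfies `(α_ν, δ_{ν,n(ν)})`-Zd for each
`f_ν = ∏_ℓ (x − a_{νℓ})` with `n_ν > 1`, the `a_{νℓ}` pairwise distinct.  Then there
is a nonzero constant `c ∈ k` with
`ver(F) = c · ∏_ν res(f_ν, δ_ν^{n_ν−1}) · ∏_ν ∏_{ν'≠ν} res(f_ν, f_{ν'})^{n_{ν'}}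
  / ∏_ν res(f_ν, α_ν^{n_ν−1})`
(the resultant of the monic split `f_ν` with `h` being `∏_ℓ h(a_{νℓ})`). -/
theorem stmt8 {k A L : Type*} [Field k] [IsAlgClosed k] [CharZero k]
    [CommRing A] [IsDomain A] [Algebra k A]
    [Field L] [IsAlgClosed L] [CharZero L]
    (φ : A →+* L) (hφ : Function.Injective φ)
    (n' : ℕ) (p : ℕ → Polynomial A) (hdeg : ∀ i, (p i).natDegree ≤ n')
    (m : ℕ) (d nn : Fin m → ℕ) (hd : ∀ ν, 0 < d ν) (hnn : ∀ ν, 0 < nn ν)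
    (hn' : n' = ∑ ν, d ν * nn ν)
    (a : (ν : Fin m) → Fin (d ν) → L)
    (ha : Function.Injective fun q : Σ ν, Fin (d ν) => a q.1 q.2)
    (fp : Fin m → Polynomial A) (hfmonic : ∀ ν, (fp ν).Monic)
    (hffac : ∀ ν, (fp ν).map φ = ∏ ℓ, (X - C (a ν ℓ)))
    (hF0 : p 0 = ∏ ν, fp ν ^ nn ν)
    (s : (ν : Fin m) → (ℓ : Fin (d ν)) → Fin (nn ν) → HahnSeries ℚ L)
    (hs : ∀ ν ℓ i, HasConst (s ν ℓ i) (a ν ℓ))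
    (hsplit : (fam n' p).map (Phi φ) = ∏ ν, ∏ ℓ, ∏ i, (X - C (s ν ℓ i)))
    (αp δp : Fin m → Polynomial A) (β : Fin m → ℕ → Polynomial A) (nd : Fin m → ℕ)
    (hZd : ∀ ν, 1 < nn ν →
      1 ≤ nd ν ∧
      (∀ ℓ, ((αp ν * δp ν).map φ).eval (a ν ℓ) ≠ 0) ∧
      ∀ i ≤ nd ν, αp ν * p i =
        PowerSeries.coeff (R := Polynomial A) i
          ((PowerSeries.mk fun j =>
            if j = 0 then fp ν * β ν 0 else if j < nd ν then β ν j else 0) ^ nn ν) +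
          (if i = nd ν then δp ν else 0)) :
    ∃ c : k, c ≠ 0 ∧
      ver d nn a s =
        φ (algebraMap k A c) *
          (∏ ν, ∏ ℓ, (((δp ν).map φ).eval (a ν ℓ)) ^ (nn ν - 1)) *
          (∏ ν, ∏ ν' ∈ Finset.univ.erase ν,
            (∏ ℓ, ∏ ℓ', (a ν ℓ - a ν' ℓ')) ^ nn ν') /
          (∏ ν, ∏ ℓ, (((αp ν).map φ).eval (a ν ℓ)) ^ (nn ν - 1)) := by
  have hnn0 (ν : Fin m) : nn ν ≠ 0 := (hnn ν).ne'
  refine ⟨vertexConst d nn, Int.cast_ne_zero.2 (vertexConst_ne_zero d hnn0), ?_⟩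
  rw [map_intCast, map_intCast]
  exact stmt8_general φ n' p hdeg m d nn (fun ν => Nat.cast_ne_zero.2 (hnn0 ν)) a ha fp hffac hF0 s
    hs hsplit αp δp β nd hZd
end
end

section
/- Let F(x,t) be a family of polynomials with Δ_{A[[t]]}(F) ≠ 0 and F_0 = ∏_ν f_ν^{n_ν}, and suppose F satisfies (α, δ_n)-Zd for a linear factor f_ν = x − a_ν. Then the type of F with respect to f_ν is τ_ν = n; more precisely, any two distinct t-roots of F with constant term a_ν differ by a Puiseux series of order n/n_ν, so m_ν = n/n_ν and τ_ν = ⌊n_ν · (n/n_ν)⌋ = n. -/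
open Finset Polynomial

noncomputable section

/-!
A Zeuthen decomposition says that, up to the factor `α`, the family is `B ^ N + t ^ n R` with `B`
and `R` in `A⟦t⟧[x]`, where `B` has a simple zero and `R` a nonzero value at `x = a₀`, `t = 0`.
Let `s ≠ r` be two `t`-roots with constant term `a₀`. In the ring of series without negative
exponents, Taylor expansion shows that `s - r` and `B(s) - B(r)` agree up to a unit, and so do
`B(s) ^ N`, `B(r) ^ N` and `t ^ n`. As the ring is integrally closed, `B(r) = ε B(s)` for a unit
`ε`. If `ε` had constant term `1`, then `B(s) ^ N (ε ^ N - 1) = t ^ n (R(s) - R(r))`, which is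
divisible by `B(s) ^ N (s - r)`, hence by `B(s) ^ N B(s) (ε - 1)`, would force `B(s)` to divide
`1 + ε + ⋯ + ε ^ (N - 1)`, whose constant term is `N ≠ 0`. So `ε - 1` is a unit, and
`(s - r) ^ N`, `B(s) ^ N` and `t ^ n` have the same order.
-/

section LocalDomain

open IsLocalRing

variable {O : Type*} [CommRing O] [IsLocalRing O]

lemma associated_eval_sub_eval (P : O[X]) {s r : O} (hsr : s - r ∈ maximalIdeal O)
    (hP : IsUnit (P.derivative.eval r)) : Associated (s - r) (P.eval s - P.eval r) := by
  obtain ⟨k, hk⟩ := P.binomExpansion r (s - r)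
  have hunit : IsUnit (P.derivative.eval r + k * (s - r)) := by
    rw [← residue_ne_zero_iff_isUnit, map_add, map_mul, (residue_eq_zero_iff _).mpr hsr, mul_zero,
      add_zero, residue_ne_zero_iff_isUnit]
    exact hP
  refine ⟨hunit.unit, ?_⟩
  rw [add_sub_cancel] at hk
  rw [IsUnit.unit_spec, hk]
  ring

lemma isUnit_sub_one_of_mul_dvd_pow_sub_one [IsDomain O] {N : ℕ} (hN : IsUnit (N : O)) {ε x : O}
    (hε : ε ≠ 1) (hx : x ∈ maximalIdeal O) (hdvd : (ε - 1) * x ∣ ε ^ N - 1) :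
    IsUnit (ε - 1) := by
  have hx_dvd : x ∣ ∑ i ∈ range N, ε ^ i := by
    rwa [← mul_geom_sum, mul_dvd_mul_iff_left (sub_ne_zero.mpr hε)] at hdvd
  by_contra hnonunit
  have hres : residue O ε = 1 := by
    rw [← map_one (residue O), ← sub_eq_zero, ← map_sub, residue_eq_zero_iff]
    exact hnonunit
  have hsum := (residue_eq_zero_iff _).mpr (Ideal.mem_of_dvd _ hx_dvd hx)
  simp only [map_sum, map_pow, hres, one_pow, sum_const, card_range, nsmul_eq_mul, mul_one] at hsum
  exact (hN.map (residue O)).ne_zero (by rwa [map_natCast])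

theorem associated_sub_pow_of_eval_pow_add_mul_eq_zero [IsDomain O] [IsIntegrallyClosed O]
    {N : ℕ} (hN : IsUnit (N : O)) {τ : O} (hτ : τ ∈ maximalIdeal O) {B R : O[X]} {s r : O}
    (hne : s ≠ r) (hsr : s - r ∈ maximalIdeal O) (hB : IsUnit (B.derivative.eval r))
    (hRs : IsUnit (R.eval s)) (hRr : IsUnit (R.eval r))
    (hs : B.eval s ^ N + τ * R.eval s = 0) (hr : B.eval r ^ N + τ * R.eval r = 0) :
    Associated ((s - r) ^ N) τ := by
  have : NeZero (N : O) := ⟨hN.ne_zero⟩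
  have : NeZero N := .of_neZero_natCast O
  have hdiff := associated_eval_sub_eval B hsr hB
  have hτs : Associated τ (B.eval s ^ N) :=
    ⟨-hRs.unit, by rw [Units.val_neg, IsUnit.unit_spec]; linear_combination -hs⟩
  have hτr : Associated τ (B.eval r ^ N) :=
    ⟨-hRr.unit, by rw [Units.val_neg, IsUnit.unit_spec]; linear_combination -hr⟩
  obtain ⟨ε, hε⟩ : Associated (B.eval s) (B.eval r) :=
    (Associated.pow_iff (NeZero.ne N)).mp (hτs.symm.trans hτr)
  have hBs : B.eval s ∈ maximalIdeal O :=
    Ideal.IsPrime.mem_of_pow_mem inferInstance N (Ideal.mem_of_dvd _ hτs.dvd hτ)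
  have hBne : B.eval s - B.eval r ≠ 0 := hdiff.ne_zero_iff.mp (sub_ne_zero.mpr hne)
  have hBs0 : B.eval s ≠ 0 := fun h0 => hBne (by rw [← hε, h0, zero_mul, sub_zero])
  have hε1 : (ε : O) ≠ 1 := fun h1 => hBne (by rw [← hε, h1, mul_one, sub_self])
  have hdvd : (ε - 1) * B.eval s ∣ (ε : O) ^ N - 1 := by
    rw [← mul_dvd_mul_iff_left (pow_ne_zero N hBs0)]
    calc B.eval s ^ N * ((ε - 1) * B.eval s)
      _ = B.eval s ^ N * -(B.eval s - B.eval r) := by rw [← hε]; ring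
      _ ∣ τ * (R.eval s - R.eval r) :=
          mul_dvd_mul hτs.symm.dvd
            (neg_dvd.mpr (hdiff.symm.dvd.trans (sub_dvd_eval_sub s r R)))
      _ = B.eval s ^ N * ((ε : O) ^ N - 1) := by
          rw [mul_sub (B.eval s ^ N), mul_one, ← mul_pow, hε]
          linear_combination hs - hr
  have hunit := isUnit_sub_one_of_mul_dvd_pow_sub_one hN hε1 hBs hdvd
  have hBdiff : Associated (B.eval s - B.eval r) (B.eval s) := by
    rw [show B.eval s - B.eval r = B.eval s * -(ε - 1) by rw [← hε]; ring]
    exact associated_mul_unit_left _ _ hunit.neg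
  exact ((hdiff.trans hBdiff).pow_pow).trans hτs.symm

end LocalDomain

section HahnIntegers

open IsLocalRing

variable {Γ L : Type*} [AddCommGroup Γ] [LinearOrder Γ] [IsOrderedAddMonoid Γ] [Field L]

variable (Γ L) in
/-- The valuation ring of Hahn series supported on nonnegative exponents, to which all the
`t`-roots of a monic family belong. It is the valuation subring of `HahnSeries.addVal`, so that it
comes with its structure of integrally closed local domain. -/
def hahnIntegers : ValuationSubring (HahnSeries Γ L) :=
  (AddValuation.toValuation (HahnSeries.addVal Γ L)).valuationSubring

lemma mem_hahnIntegers_iff_orderTop {x : HahnSeries Γ L} :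
    x ∈ hahnIntegers Γ L ↔ 0 ≤ x.orderTop := Iff.rfl

lemma mem_hahnIntegers_iff {x : HahnSeries Γ L} :
    x ∈ hahnIntegers Γ L ↔ ∀ q < 0, x.coeff q = 0 := by
  rw [mem_hahnIntegers_iff_orderTop, HahnSeries.le_orderTop_iff_forall]
  simp only [← WithTop.coe_zero, WithTop.coe_lt_coe]

lemma coeff_zero_mul_of_mem_hahnIntegers {x y : HahnSeries Γ L} (hx : x ∈ hahnIntegers Γ L)
    (hy : y ∈ hahnIntegers Γ L) : (x * y).coeff 0 = x.coeff 0 * y.coeff 0 := by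
  have nonneg_of_mem_support {z : HahnSeries Γ L} (hz : z ∈ hahnIntegers Γ L) {q : Γ}
      (hq : q ∈ z.support) : 0 ≤ q :=
    not_lt.mp fun hneg => hq (mem_hahnIntegers_iff.mp hz q hneg)
  rw [HahnSeries.coeff_mul]
  refine sum_eq_single (0, 0) (fun ij hij hne => absurd ?_ hne) fun h => ?_
  · obtain ⟨hi, hj, hsum⟩ := mem_antidiagonal.mp hij
    obtain ⟨hi0, hj0⟩ := (add_eq_zero_iff_of_nonneg (nonneg_of_mem_support hx hi)
      (nonneg_of_mem_support hy hj)).mp hsum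
    exact Prod.ext hi0 hj0
  · by_contra hne
    exact h (mem_antidiagonal.mpr
      ⟨left_ne_zero_of_mul hne, right_ne_zero_of_mul hne, add_zero 0⟩)

/-- The constant term `s(0)` of a series `s` without negative exponents, as a ring homomorphism;
it identifies the residue field of `hahnIntegers Γ L` with `L`. -/
def constTerm : hahnIntegers Γ L →+* L where
  toFun x := (x : HahnSeries Γ L).coeff 0
  map_zero' := HahnSeries.coeff_zero
  map_one' := by simp
  map_add' _ _ := HahnSeries.coeff_add
  map_mul' x y := coeff_zero_mul_of_mem_hahnIntegers x.2 y.2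

lemma mem_maximalIdeal_hahnIntegers_iff {x : hahnIntegers Γ L} :
    x ∈ maximalIdeal (hahnIntegers Γ L) ↔ constTerm x = 0 := by
  have hpos : x ∈ maximalIdeal (hahnIntegers Γ L) ↔ 0 < (x : HahnSeries Γ L).orderTop :=
    Valuation.mem_maximalIdeal_iff _ (AddValuation.toValuation (HahnSeries.addVal Γ L))
  rw [hpos]
  refine ⟨HahnSeries.coeff_eq_zero_of_lt_orderTop, fun hx => lt_of_le_of_ne x.2 fun h0 => ?_⟩
  exact HahnSeries.coeff_orderTop_ne h0.symm hx

lemma isUnit_hahnIntegers_iff {x : hahnIntegers Γ L} : IsUnit x ↔ constTerm x ≠ 0 := by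
  rw [Ne, ← mem_maximalIdeal_hahnIntegers_iff, IsLocalRing.notMem_maximalIdeal]

lemma order_le_order_of_dvd {x y : hahnIntegers Γ L} (hy : y ≠ 0) (h : x ∣ y) :
    (x : HahnSeries Γ L).order ≤ (y : HahnSeries Γ L).order := by
  obtain ⟨c, rfl⟩ := h
  have hx0 := left_ne_zero_of_mul hy
  have hc0 := right_ne_zero_of_mul hy
  rw [MulMemClass.coe_mul, HahnSeries.order_mul (by simpa using hx0) (by simpa using hc0)]
  exact le_add_of_nonneg_right (HahnSeries.zero_le_orderTop_iff.mp c.2)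

lemma order_eq_order_of_associated {x y : hahnIntegers Γ L} (h : Associated x y) :
    (x : HahnSeries Γ L).order = (y : HahnSeries Γ L).order := by
  by_cases hx : x = 0
  · rw [hx, h.eq_zero_iff.mp hx]
  · exact (order_le_order_of_dvd (h.ne_zero_iff.mp hx) h.dvd).antisymm
      (order_le_order_of_dvd hx h.symm.dvd)

end HahnIntegers

section SwapSeries

variable {A : Type*} [CommRing A]

variable (A) in
/-- The embedding `A⟦t⟧[x] → A[x]⟦t⟧`, through which a polynomial in `x` over `A⟦t⟧` is read as a
family of polynomials `∑ pᵢ(x) tⁱ`. -/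
def swapSeries : (PowerSeries A)[X] →+* PowerSeries A[X] :=
  eval₂RingHom (PowerSeries.map C) (PowerSeries.C X)

lemma coeff_coeff_swapSeries (P : (PowerSeries A)[X]) (i j : ℕ) :
    (PowerSeries.coeff i (swapSeries A P)).coeff j = PowerSeries.coeff i (P.coeff j) := by
  induction P using Polynomial.induction_on' with
  | add P Q hP hQ => simp only [map_add, coeff_add, hP, hQ]
  | monomial n a =>
    simp only [swapSeries, coe_eval₂RingHom, eval₂_monomial]
    rw [← map_pow, PowerSeries.coeff_mul_C, PowerSeries.coeff_map, coeff_C_mul_X_pow,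
      coeff_monomial, eq_comm, apply_ite (PowerSeries.coeff i), map_zero]
    simp only [eq_comm]

lemma constantCoeff_swapSeries (P : (PowerSeries A)[X]) :
    PowerSeries.constantCoeff (swapSeries A P) = P.map PowerSeries.constantCoeff := by
  ext j
  rw [coeff_map, ← PowerSeries.coeff_zero_eq_constantCoeff_apply,
    ← PowerSeries.coeff_zero_eq_constantCoeff_apply, coeff_coeff_swapSeries]

lemma swapSeries_C_X_pow (n : ℕ) :
    swapSeries A (C (PowerSeries.X ^ n)) = PowerSeries.X ^ n := by
  rw [swapSeries, coe_eval₂RingHom, eval₂_C, map_pow, PowerSeries.map_X]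

lemma swapSeries_map_C (a : A[X]) : swapSeries A (a.map PowerSeries.C) = PowerSeries.C a := by
  ext i j
  rw [coeff_coeff_swapSeries, coeff_map, PowerSeries.coeff_C, PowerSeries.coeff_C]
  split_ifs <;> simp

lemma swapSeries_fam {d : ℕ} {p : ℕ → A[X]} (hdeg : ∀ i, (p i).natDegree ≤ d) :
    swapSeries A (fam d p) = PowerSeries.mk p := by
  ext i j
  rw [coeff_coeff_swapSeries, PowerSeries.coeff_mk, fam, finsetSum_coeff]
  simp only [coeff_C_mul_X_pow, sum_ite_eq, mem_range]
  split_ifs with hj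
  · exact PowerSeries.coeff_mk ..
  · rw [map_zero, coeff_eq_zero_of_natDegree_lt ((hdeg i).trans_lt (by lia))]

lemma exists_swapSeries_eq_mk {n : ℕ} {b : ℕ → A[X]} (hb : ∀ j, n ≤ j → b j = 0) :
    ∃ B, swapSeries A B = PowerSeries.mk b := by
  refine ⟨fam ((range n).sup fun j => (b j).natDegree) b, swapSeries_fam fun j => ?_⟩
  rcases lt_or_ge j n with hj | hj
  · exact le_sup (f := fun j => (b j).natDegree) (mem_range.mpr hj)
  · simp [hb j hj]

lemma C_X_pow_dvd_iff {P : (PowerSeries A)[X]} {n : ℕ} :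
    C (PowerSeries.X ^ n) ∣ P ↔ PowerSeries.X ^ n ∣ swapSeries A P := by
  simp only [C_dvd_iff_dvd_coeff, PowerSeries.X_pow_dvd_iff, Polynomial.ext_iff,
    coeff_coeff_swapSeries, coeff_zero]
  exact ⟨fun h i hi j => h j i hi, fun h j i hi => h i hi j⟩

lemma exists_map_C_mul_fam_eq_pow_add {d n N : ℕ} {p b : ℕ → A[X]} {α δ : A[X]}
    (hdeg : ∀ i, (p i).natDegree ≤ d) (hb : ∀ j, n ≤ j → b j = 0)
    (hZd : ∀ i ≤ n, α * p i =
      PowerSeries.coeff i (PowerSeries.mk b ^ N) + if i = n then δ else 0) :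
    ∃ B R : (PowerSeries A)[X],
      α.map PowerSeries.C * fam d p = B ^ N + C (PowerSeries.X ^ n) * R ∧
      B.map PowerSeries.constantCoeff = b 0 ∧ R.map PowerSeries.constantCoeff = δ := by
  obtain ⟨B, hB⟩ := exists_swapSeries_eq_mk hb
  have hcoeff (i : ℕ) (hi : i ≤ n) :
      PowerSeries.coeff i (swapSeries A (α.map PowerSeries.C * fam d p - B ^ N)) =
        if i = n then δ else 0 := by
    rw [map_sub, map_mul, map_pow, swapSeries_map_C, swapSeries_fam hdeg, hB, map_sub,
      PowerSeries.coeff_C_mul, PowerSeries.coeff_mk, hZd i hi, add_sub_cancel_left]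
  obtain ⟨R, hR⟩ : C (PowerSeries.X ^ n) ∣ α.map PowerSeries.C * fam d p - B ^ N := by
    rw [C_X_pow_dvd_iff, PowerSeries.X_pow_dvd_iff]
    intro i hi
    rw [hcoeff i hi.le, if_neg hi.ne]
  refine ⟨B, R, sub_eq_iff_eq_add'.mp hR, ?_, ?_⟩
  · rw [← constantCoeff_swapSeries, hB, ← PowerSeries.coeff_zero_eq_constantCoeff_apply,
      PowerSeries.coeff_mk]
  · have hn := hcoeff n le_rfl
    rwa [hR, map_mul, swapSeries_C_X_pow, PowerSeries.coeff_X_pow_mul', if_pos le_rfl,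
      Nat.sub_self, PowerSeries.coeff_zero_eq_constantCoeff_apply, constantCoeff_swapSeries,
      if_pos rfl] at hn

end SwapSeries

section Specialization

variable {A L : Type*} [CommRing A] [Field L] (φ : A →+* L)

lemma Phi_mem_hahnIntegers (c : PowerSeries A) : Phi φ c ∈ hahnIntegers ℚ L := by
  rw [mem_hahnIntegers_iff]
  intro q hq
  rw [Phi, RingHom.comp_apply, HahnSeries.ofPowerSeries_apply]
  refine HahnSeries.embDomain_of_notMem_range ?_
  rintro ⟨n, rfl⟩
  exact hq.not_ge (Nat.cast_nonneg n)

/-- The map `A⟦t⟧ → L⟦t^ℚ⟧` induced by `φ`: this is `Phi φ` with values in the valuation ring, where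
congruences and units can be read off from constant terms. -/
def integralPhi : PowerSeries A →+* hahnIntegers ℚ L :=
  (Phi φ).codRestrict (hahnIntegers ℚ L) (Phi_mem_hahnIntegers φ)

lemma coe_integralPhi_X_pow (n : ℕ) :
    (integralPhi φ (PowerSeries.X ^ n) : HahnSeries ℚ L) = HahnSeries.single (n : ℚ) 1 := by
  change Phi φ (PowerSeries.X ^ n) = _
  simp [Phi, HahnSeries.ofPowerSeries_X_pow]

lemma constTerm_integralPhi (c : PowerSeries A) :
    constTerm (integralPhi φ c) = φ (PowerSeries.constantCoeff c) := by
  have h := HahnSeries.ofPowerSeries_apply_coeff (Γ := ℚ) (PowerSeries.map φ c) 0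
  rw [Nat.cast_zero] at h
  exact h.trans (by simp)

lemma constTerm_eval_map_integralPhi {s : hahnIntegers ℚ L} {a : A} (hs : constTerm s = φ a)
    (P : (PowerSeries A)[X]) :
    constTerm ((P.map (integralPhi φ)).eval s) =
      φ ((P.map PowerSeries.constantCoeff).eval a) := by
  have hcomp : constTerm.comp (integralPhi φ) = φ.comp PowerSeries.constantCoeff :=
    RingHom.ext (constTerm_integralPhi φ)
  rw [eval_map, hom_eval₂, hs, hcomp, eval_map, hom_eval₂]

lemma isRoot_map_integralPhi_iff {P : (PowerSeries A)[X]} {s : hahnIntegers ℚ L} :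
    (P.map (integralPhi φ)).IsRoot s ↔ (P.map (Phi φ)).IsRoot (s : HahnSeries ℚ L) := by
  have hcomp : (hahnIntegers ℚ L).subtype.comp (integralPhi φ) = Phi φ := rfl
  rw [← hcomp, ← Polynomial.map_map]
  exact (isRoot_map_iff (hahnIntegers ℚ L).subtype_injective).symm

lemma HasConst.mem_hahnIntegers {s : HahnSeries ℚ L} {a : L} (hs : HasConst s a) :
    s ∈ hahnIntegers ℚ L :=
  mem_hahnIntegers_iff.mpr hs.2

theorem order_sub_eq_div_of_isRoot {N n : ℕ} [NeZero (N : L)] (hn : n ≠ 0)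
    {B R : (PowerSeries A)[X]} {a : A}
    (hB : φ ((B.map PowerSeries.constantCoeff).derivative.eval a) ≠ 0)
    (hR : φ ((R.map PowerSeries.constantCoeff).eval a) ≠ 0) {s r : HahnSeries ℚ L}
    (hs : HasConst s (φ a)) (hr : HasConst r (φ a)) (hne : s ≠ r)
    (hs_root : ((B ^ N + C (PowerSeries.X ^ n) * R).map (Phi φ)).IsRoot s)
    (hr_root : ((B ^ N + C (PowerSeries.X ^ n) * R).map (Phi φ)).IsRoot r) :
    (s - r).order = (n : ℚ) / N := by
  lift s to hahnIntegers ℚ L using hs.mem_hahnIntegers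
  lift r to hahnIntegers ℚ L using hr.mem_hahnIntegers
  replace hs : constTerm s = φ a := hs.1
  replace hr : constTerm r = φ a := hr.1
  rw [← isRoot_map_integralPhi_iff] at hs_root hr_root
  simp only [IsRoot.def, Polynomial.map_add, Polynomial.map_pow, Polynomial.map_mul, map_C,
    eval_add, eval_pow, eval_mul, eval_C] at hs_root hr_root
  have hassoc : Associated ((s - r) ^ N) (integralPhi φ (PowerSeries.X ^ n)) := by
    refine associated_sub_pow_of_eval_pow_add_mul_eq_zero ?_ ?_ (ne_of_apply_ne _ hne) ?_ ?_ ?_ ?_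
      hs_root hr_root
    · rw [isUnit_hahnIntegers_iff, map_natCast]
      exact NeZero.ne _
    · rw [mem_maximalIdeal_hahnIntegers_iff, constTerm_integralPhi, map_pow,
        PowerSeries.constantCoeff_X, zero_pow hn, map_zero]
    · rw [mem_maximalIdeal_hahnIntegers_iff, map_sub, hs, hr, sub_self]
    · rwa [isUnit_hahnIntegers_iff, derivative_map, constTerm_eval_map_integralPhi φ hr,
        ← derivative_map]
    · rwa [isUnit_hahnIntegers_iff, constTerm_eval_map_integralPhi φ hs]
    · rwa [isUnit_hahnIntegers_iff, constTerm_eval_map_integralPhi φ hr]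
  have horder := order_eq_order_of_associated hassoc
  rw [coe_integralPhi_X_pow, HahnSeries.order_single one_ne_zero, SubmonoidClass.coe_pow,
    HahnSeries.order_pow, nsmul_eq_mul, mul_comm] at horder
  have : NeZero N := .of_neZero_natCast L
  exact eq_div_of_mul_eq (NeZero.ne _) horder

lemma map_eval_ne_zero_of_mul_X_sub_C_pow_mul_eq {N : ℕ} [NeZero N] {a : A} {α h β : A[X]}
    (hα : φ (α.eval a) ≠ 0) (hh : φ (h.eval a) ≠ 0)
    (heq : α * ((X - C a) ^ N * h) = ((X - C a) * β) ^ N) : φ (β.eval a) ≠ 0 := by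
  have hcancel : α * h = β ^ N := ((monic_X_sub_C a).pow N).isRegular.left <| by
    simp only [← mul_pow, ← heq]
    ring
  have heval := congrArg (fun P => φ (P.eval a)) hcancel
  simp only [eval_mul, eval_pow, map_mul, map_pow] at heval
  exact ne_zero_pow (NeZero.ne N) (heval ▸ mul_ne_zero hα hh)

lemma map_eval_prod_pow_ne_zero {κ : Type*} [Fintype κ] {ι : κ → Type*} [∀ j, Fintype (ι j)]
    {g : κ → A[X]} {r : (j : κ) → ι j → L} (hg : ∀ j, (g j).map φ = ∏ ℓ, (X - C (r j ℓ))) {a : A}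
    (ha : ∀ j ℓ, r j ℓ ≠ φ a) (M : κ → ℕ) : φ ((∏ j, g j ^ M j).eval a) ≠ 0 := by
  simp only [eval_prod, eval_pow, map_prod, map_pow, ← eval_map_apply, hg, eval_sub, eval_X, eval_C]
  exact prod_ne_zero_iff.mpr fun j _ => pow_ne_zero _ <|
    prod_ne_zero_iff.mpr fun ℓ _ => sub_ne_zero.mpr (ha j ℓ).symm

end Specialization

lemma isRoot_of_eq_prod_X_sub_C_mul {R ι : Type*} [CommRing R] [Fintype ι] {P Q : R[X]} {s : ι → R}
    (h : P = (∏ i, (X - C (s i))) * Q) (i : ι) : P.IsRoot (s i) := by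
  rw [h, IsRoot.def, eval_mul, eval_prod, prod_eq_zero (mem_univ i) (by simp), zero_mul]

lemma injective_of_rootsSep_ne_zero {L : Type*} [Field L] {ι : Type*} [Fintype ι] [DecidableEq ι]
    {S : ι → HahnSeries ℚ L} (hS : rootsSep S ≠ 0) : Function.Injective S := by
  intro i j hij
  by_contra hne
  exact prod_ne_zero_iff.mp hS (i, j) (by simpa using hne) (sub_eq_zero.mpr hij)

theorem stmt14_general {A L : Type*} [CommRing A] [Field L] (φ : A →+* L) {n' N : ℕ}
    [NeZero (N : L)] {a₀ : A} {p : ℕ → A[X]} (hdeg : ∀ i, (p i).natDegree ≤ n') {h : A[X]}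
    (hF0 : p 0 = (X - C a₀) ^ N * h) (hh : φ (h.eval a₀) ≠ 0)
    {α δp : A[X]} {β : ℕ → A[X]} {nd : ℕ} (hnd : 1 ≤ nd) (hcop : φ ((α * δp).eval a₀) ≠ 0)
    (hZd : ∀ i ≤ nd, α * p i =
      PowerSeries.coeff (R := A[X]) i
        ((PowerSeries.mk fun j =>
          if j = 0 then (X - C a₀) * β 0 else if j < nd then β j else 0) ^ N) +
        (if i = nd then δp else 0))
    {s r : HahnSeries ℚ L} (hs : HasConst s (φ a₀)) (hr : HasConst r (φ a₀)) (hne : s ≠ r)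
    (hs_root : ((fam n' p).map (Phi φ)).IsRoot s) (hr_root : ((fam n' p).map (Phi φ)).IsRoot r) :
    (s - r).order = (nd : ℚ) / N := by
  rw [eval_mul, map_mul] at hcop
  have hβ : φ ((β 0).eval a₀) ≠ 0 := by
    have : NeZero N := .of_neZero_natCast L
    refine map_eval_ne_zero_of_mul_X_sub_C_pow_mul_eq φ (N := N) (left_ne_zero_of_mul hcop) hh ?_
    rw [← hF0, hZd 0 (Nat.zero_le nd), PowerSeries.coeff_zero_eq_constantCoeff_apply, map_pow,
      ← PowerSeries.coeff_zero_eq_constantCoeff_apply, PowerSeries.coeff_mk, if_pos rfl,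
      if_neg (by lia), add_zero]
  obtain ⟨B, R, hBR, hB, hR⟩ := exists_map_C_mul_fam_eq_pow_add hdeg
    (fun j hj => by rw [if_neg (by lia), if_neg (by lia)]) hZd
  have isRoot_of_isRoot_fam {x : HahnSeries ℚ L} (hx : ((fam n' p).map (Phi φ)).IsRoot x) :
      ((B ^ N + C (PowerSeries.X ^ nd) * R).map (Phi φ)).IsRoot x := by
    rw [← hBR, Polynomial.map_mul]
    exact root_mul_left_of_isRoot _ hx
  refine order_sub_eq_div_of_isRoot φ (by lia) ?_ ?_ hs hr hne (isRoot_of_isRoot_fam hs_root)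
    (isRoot_of_isRoot_fam hr_root)
  · simpa [hB] using hβ
  · rw [hR]
    exact right_ne_zero_of_mul hcop

/-- **Proposition 4.6.**  Suppose the family `F(x,t)`, with
`F_0 = (x − a₀)^N · ∏_j g_j^{M_j}` and `Δ_{A[[t]]}(F) ≠ 0`, satisfies `(α, δ)`-Zd for
the linear factor `f_ν = x − a₀` (of multiplicity `N > 1`), with `nd` the order of the
Zd decomposition.  Then the type of `F` with respect to `f_ν` is `τ_ν = nd`: any two
distinct `t`-roots of `F` with constant term `a₀` differ in order exactly `nd/N`, so
`m_ν = nd/N` and `τ_ν = ⌊N · (nd/N)⌋ = nd`. -/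
theorem stmt14 {A L : Type*} [CommRing A] [IsDomain A]
    [Field L] [IsAlgClosed L] [CharZero L]
    (φ : A →+* L) (hφ : Function.Injective φ)
    (n' N : ℕ) (hN : 1 < N)
    (a₀ : A)
    (mg : ℕ) (g : Fin mg → Polynomial A) (Mg dg : Fin mg → ℕ)
    (hgmonic : ∀ j, (g j).Monic)
    (rg : (j : Fin mg) → Fin (dg j) → L)
    (hgfac : ∀ j, (g j).map φ = ∏ ℓ, (X - C (rg j ℓ)))
    (hrg : ∀ j ℓ, rg j ℓ ≠ φ a₀)
    (hrgInj : Function.Injective fun q : Σ j, Fin (dg j) => rg q.1 q.2)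
    (p : ℕ → Polynomial A) (hdeg : ∀ i, (p i).natDegree ≤ n')
    (hF0 : p 0 = (X - C a₀) ^ N * ∏ j, g j ^ Mg j)
    (s : Fin N → HahnSeries ℚ L) (hs : ∀ i, HasConst (s i) (φ a₀))
    (w : (j : Fin mg) → Fin (dg j) → Fin (Mg j) → HahnSeries ℚ L)
    (hw : ∀ j ℓ i, HasConst (w j ℓ i) (rg j ℓ))
    (hsplit : (fam n' p).map (Phi φ) =
      (∏ i, (X - C (s i))) * ∏ j, ∏ ℓ, ∏ i, (X - C (w j ℓ i)))
    (hΔ : rootsSep (Sum.elim s fun q : Σ j : Fin mg, Fin (dg j) × Fin (Mg j) =>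
        w q.1 q.2.1 q.2.2) ≠ 0)
    (α δp : Polynomial A) (β : ℕ → Polynomial A) (nd : ℕ) (hnd : 1 ≤ nd)
    (hcop : (α * δp).eval a₀ ≠ 0)
    (hZd : ∀ i ≤ nd, α * p i =
      PowerSeries.coeff (R := Polynomial A) i
        ((PowerSeries.mk fun j =>
          if j = 0 then (X - C a₀) * β 0 else if j < nd then β j else 0) ^ N) +
        (if i = nd then δp else 0)) :
    (∀ i j, i ≠ j → (s i - s j).order = (nd : ℚ) / (N : ℚ)) ∧
      ⌊(N : ℚ) * ((nd : ℚ) / (N : ℚ))⌋ = (nd : ℤ) := by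
  have : NeZero N := ⟨by lia⟩
  have hroot := isRoot_of_eq_prod_X_sub_C_mul hsplit
  exact ⟨fun i j hij => stmt14_general φ hdeg hF0 (map_eval_prod_pow_ne_zero φ hgfac hrg Mg) hnd
      ((map_ne_zero_iff φ hφ).mpr hcop) hZd (hs i) (hs j)
      ((injective_of_rootsSep_ne_zero hΔ).ne (Sum.inl_injective.ne hij)) (hroot i) (hroot j),
    by rw [mul_div_cancel₀ _ (NeZero.ne _), Int.floor_natCast]⟩
end
end
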